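/- arXiv:2111.08949 — 5 statements merged into one kernel-verified Lean document; each statement's English description precedes it below -/
import Mathlib

section
/- There exists q_0 > 0 such that for every 0 < q ≤ q_0 and every n ∈ ℕ, χ(ℝ^n_∞, G(q)) > log_3 n; that is, for every colouring of ℝ^n with at most log_3 n colours, some colour class contains an isometric copy of G(q). -/
open Set Filter

/-- The set `A` (in the metric space `β`) contains an isometric copy of the
metric (sub)space `M` (a subset of the metric space `α`). -/
def HasCopy {α β : Type*} [MetricSpace α] [MetricSpace β] (M : Set α) (A : Set β) : Prop :=
  ∃ f : α → β, (∀ x ∈ M, ∀ y ∈ M, dist (f x) (f y) = dist x y) ∧ f '' M ⊆ A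

/-- `G(q) = {0, 1, 1+q, 1+q+q², …} ⊆ ℝ`. -/
def geomSet (q : ℝ) : Set ℝ :=
  Set.range (fun m : ℕ => ∑ i ∈ Finset.range m, q ^ i)

noncomputable section ChiGeom

/-- Distance from the `i`-th point of `G(q)` to the limit point. -/
def gR (q : ℝ) (i : ℕ) : ℝ := q ^ i / (1 - q)

lemma gR_diff {q : ℝ} (hq : q ≤ 1 / 6) (i : ℕ) : gR q i - gR q (i + 1) = q ^ i := by
  have h : (1 - q) ≠ 0 := by linarith
  unfold gR
  field_simp
  ring

lemma gR_bounds {q : ℝ} (h0 : 0 < q) (hq : q ≤ 1 / 6) (i : ℕ) :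
    q ^ i ≤ gR q i ∧ gR q i ≤ 3 / 2 * q ^ i := by
  have hp : 0 < q ^ i := pow_pos h0 i
  have h : 0 < 1 - q := by linarith
  unfold gR
  constructor
  · rw [le_div_iff₀ h]; nlinarith
  · rw [div_le_iff₀ h]; nlinarith

lemma geomSum_eq {q : ℝ} (hq : q ≤ 1 / 6) (i : ℕ) :
    ∑ j ∈ Finset.range i, q ^ j = gR q 0 - gR q i := by
  induction i with
  | zero => simp
  | succ i ih => rw [Finset.sum_range_succ, ih, ← gR_diff hq i]; ring

variable {n N : ℕ}

/-- The test for proceeding at level `i` for colour `c` and direction `k`. -/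
def Pass (q : ℝ) (col : (Fin n → ℝ) → Fin N) (J : Finset (Fin n)) (z : Fin n → ℝ) (i : ℕ)
    (c : Fin N) (k : Fin n) : Prop :=
  ∃ x : Fin n → ℝ, col x = c ∧ x k = z k - gR q i ∧
    (∀ j ∈ J, j ≠ k → |x j - z j| ≤ q ^ i / 2) ∧ ∀ j ∉ J, x j = z j

/-- A monochromatic initial piece of length `l` in direction `k`. -/
def Pre (q : ℝ) (col : (Fin n → ℝ) → Fin N) (l : ℕ) (J : Finset (Fin n)) (z : Fin n → ℝ)
    (c : Fin N) (k : Fin n) : Prop :=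
  ∃ x : ℕ → Fin n → ℝ, (∀ i < l, col (x i) = c ∧ x i k = z k - gR q i) ∧
    (∀ i, i + 1 < l → ∀ j, |x i j - x (i + 1) j| ≤ q ^ i) ∧
    (∀ i, i + 1 = l → (∀ j ∉ J, |x i j - z j| ≤ q ^ i) ∧
      ∀ j ∈ J, j ≠ k → |x i j - z j| ≤ q ^ i / 2)

/-- Only colours of `C` appear in the current region. -/
def Reg (q : ℝ) (col : (Fin n → ℝ) → Fin N) (l : ℕ) (C : Finset (Fin N)) (J : Finset (Fin n))
    (z : Fin n → ℝ) : Prop :=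
  ∀ y : Fin n → ℝ, (∀ j ∉ J, y j = z j) → (∀ j ∈ J, |y j - z j| ≤ 3 * q ^ l) → col y ∈ C

lemma step_bound {q : ℝ} (h0 : 0 < q) (hq : q ≤ 1 / 6) {J : Finset (Fin n)} {z x y : Fin n → ℝ}
    {i : ℕ} {k : Fin n}
    (hxk : x k = z k - gR q i) (hyk : y k = z k - gR q (i + 1))
    (hx1 : ∀ j ∉ J, |x j - z j| ≤ q ^ i)
    (hx2 : ∀ j ∈ J, j ≠ k → |x j - z j| ≤ q ^ i / 2)
    (hy1 : ∀ j ∉ J, y j = z j) (hy2 : ∀ j ∈ J, j ≠ k → |y j - z j| ≤ 3 * q ^ (i + 1)) (j : Fin n) :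
    |x j - y j| ≤ q ^ i := by
  have hp : 0 < q ^ i := pow_pos h0 i
  by_cases hjk : j = k
  · subst hjk
    rw [hxk, hyk]
    have := gR_diff hq i
    rw [show z j - gR q i - (z j - gR q (i + 1)) = -(gR q i - gR q (i + 1)) by ring, this, abs_neg,
      abs_of_pos hp]
  · by_cases hj : j ∈ J
    · have h1 := hx2 j hj hjk
      have h2 := hy2 j hj hjk
      have h3 : q ^ (i + 1) ≤ q ^ i / 6 := by rw [pow_succ]; nlinarith
      rw [abs_le] at *
      constructor <;> linarith [h1.1, h1.2, h2.1, h2.2]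
    · rw [hy1 j hj]; exact hx1 j hj

lemma Pre.extend {q : ℝ} (h0 : 0 < q) (hq : q ≤ 1 / 6) {col : (Fin n → ℝ) → Fin N} {l : ℕ}
    {J J' : Finset (Fin n)} {z z' : Fin n → ℝ} {c : Fin N} {k : Fin n}
    (h : Pre q col l J z c k) (y : Fin n → ℝ) (hc : col y = c) (hyk : y k = z k - gR q l)
    (hy1 : ∀ j ∉ J, y j = z j) (hy2 : ∀ j ∈ J, j ≠ k → |y j - z j| ≤ 3 * q ^ l)
    (hz : z' k = z k) (hy3 : ∀ j ∉ J', |y j - z' j| ≤ q ^ l)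
    (hy4 : ∀ j ∈ J', j ≠ k → |y j - z' j| ≤ q ^ l / 2) :
    Pre q col (l + 1) J' z' c k := by
  obtain ⟨x, hx1, hx2, hx3⟩ := h
  refine ⟨fun i => if i < l then x i else y, ?_, ?_, ?_⟩
  · intro i hi
    by_cases h : i < l
    · simp only [h, if_true, hz]; exact hx1 i h
    · have : i = l := by omega
      subst this
      simp only [h, if_false, hz]; exact ⟨hc, hyk⟩
  · intro i hi j
    have h : i < l := by omega
    by_cases h' : i + 1 < l
    · simp only [h, h', if_true]; exact hx2 i h' j
    · have hl : i + 1 = l := by omega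
      simp only [h, h', if_true, if_false]
      subst hl
      obtain ⟨h4, h5⟩ := hx3 i rfl
      exact step_bound h0 hq (hx1 i h).2 hyk h4 h5 hy1 hy2 j
  · intro i hi
    have : i = l := by omega
    subst this
    simp only [lt_irrefl, if_false]
    exact ⟨hy3, hy4⟩

lemma copy_of_seq {q : ℝ} (h0 : 0 < q) (hq : q ≤ 1 / 6) {col : (Fin n → ℝ) → Fin N}
    {c : Fin N} {k : Fin n} {a : ℝ} (X : ℕ → Fin n → ℝ) (hX : ∀ i, col (X i) = c)
    (hk : ∀ i, X i k = a - gR q i) (hs : ∀ i j, |X i j - X (i + 1) j| ≤ q ^ i) :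
    HasCopy (geomSet q) {x | col x = c} := by
  have hlt : ∀ i, gR q (i + 1) < gR q i := fun i => by
    have := gR_diff hq i
    have hp : 0 < q ^ i := pow_pos h0 i
    linarith
  have hanti : StrictAnti (gR q) := strictAnti_nat_of_succ_lt hlt
  set g : ℕ → ℝ := fun m => ∑ i ∈ Finset.range m, q ^ i with hg
  have hgR : ∀ m, g m = gR q 0 - gR q m := fun m => geomSum_eq hq m
  have hinj : Function.Injective g := by
    intro i j hij
    rw [hgR, hgR] at hij
    exact hanti.injective (by linarith)
  have hcoord : ∀ i d j, |X i j - X (i + d) j| ≤ gR q i - gR q (i + d) := by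
    intro i d j
    induction d with
    | zero => simp
    | succ d ih =>
      have h1 := hs (i + d) j
      have h2 := gR_diff hq (i + d)
      have h3 := abs_sub_le (X i j) (X (i + d) j) (X (i + d + 1) j)
      rw [← add_assoc]
      linarith
  have hdist : ∀ i d, dist (X i) (X (i + d)) = dist (g i) (g (i + d)) := by
    intro i d
    have hle : gR q (i + d) ≤ gR q i := hanti.antitone (by omega)
    have hgd : dist (g i) (g (i + d)) = gR q i - gR q (i + d) := by
      rw [Real.dist_eq, hgR, hgR,
        show gR q 0 - gR q i - (gR q 0 - gR q (i + d)) = -(gR q i - gR q (i + d)) by ring, abs_neg,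
        abs_of_nonneg (by linarith)]
    rw [hgd]
    apply le_antisymm
    · rw [dist_pi_le_iff (by linarith)]
      intro j
      rw [Real.dist_eq]; exact hcoord i d j
    · refine le_trans ?_ (dist_le_pi_dist (X i) (X (i + d)) k)
      rw [Real.dist_eq, hk, hk,
        show a - gR q i - (a - gR q (i + d)) = -(gR q i - gR q (i + d)) by ring, abs_neg]
      exact le_abs_self _
  refine ⟨fun t => X (Function.invFun g t), ?_, ?_⟩
  · rintro _ ⟨i, rfl⟩ _ ⟨j, rfl⟩
    change dist (X (Function.invFun g (g i))) (X (Function.invFun g (g j))) = dist (g i) (g j)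
    rw [Function.leftInverse_invFun hinj i, Function.leftInverse_invFun hinj j]
    rcases le_total i j with h | h
    · obtain ⟨d, rfl⟩ := Nat.exists_eq_add_of_le h
      exact hdist i d
    · obtain ⟨d, rfl⟩ := Nat.exists_eq_add_of_le h
      rw [dist_comm, hdist j d, dist_comm]
  · rintro _ ⟨t, _, rfl⟩
    exact hX _

/-- If all tests pass from level `l` on, we get a copy. -/
lemma copy_of_pass {q : ℝ} (h0 : 0 < q) (hq : q ≤ 1 / 6) {col : (Fin n → ℝ) → Fin N} {l : ℕ}
    {J : Finset (Fin n)} {z : Fin n → ℝ} {c : Fin N} {k : Fin n}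
    (h : Pre q col l J z c k) (hp : ∀ i, l ≤ i → Pass q col J z i c k) :
    HasCopy (geomSet q) {x | col x = c} := by
  obtain ⟨x, hx1, hx2, hx3⟩ := h
  have hp' : ∀ i, ∃ y : Fin n → ℝ, l ≤ i → (col y = c ∧ y k = z k - gR q i ∧
    (∀ j ∈ J, j ≠ k → |y j - z j| ≤ q ^ i / 2) ∧ ∀ j ∉ J, y j = z j) := by
    intro i
    by_cases hi : l ≤ i
    · obtain ⟨y, hy⟩ := hp i hi
      exact ⟨y, fun _ => hy⟩
    · exact ⟨0, fun h => absurd h hi⟩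
  choose y hy using hp'
  have h3 : ∀ i, l ≤ i → ∀ j ∈ J, j ≠ k → |y i j - z j| ≤ 3 * q ^ i := by
    intro i hi j hj hjk
    have := (hy i hi).2.2.1 j hj hjk
    have hp : 0 < q ^ i := pow_pos h0 i
    linarith
  apply copy_of_seq h0 hq (fun i => if i < l then x i else y i) (c := c) (k := k) (a := z k)
  · intro i
    by_cases h : i < l
    · simp only [h, if_true]; exact (hx1 i h).1
    · simp only [h, if_false]; exact (hy i (by omega)).1
  · intro i
    by_cases h : i < l
    · simp only [h, if_true]; exact (hx1 i h).2
    · simp only [h, if_false]; exact (hy i (by omega)).2.1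
  · intro i j
    by_cases h' : i + 1 < l
    · have h : i < l := by omega
      simp only [h, h', if_true]; exact hx2 i h' j
    · have hi1 := hy (i + 1) (by omega)
      by_cases h : i < l
      · have hl : i + 1 = l := by omega
        simp only [h, h', if_true, if_false]
        obtain ⟨h4, h5⟩ := hx3 i hl
        exact step_bound h0 hq (hx1 i h).2 hi1.2.1 h4 h5 hi1.2.2.2 (h3 (i + 1) (by omega)) j
      · simp only [h, h', if_false]
        have hi := hy i (by omega)
        refine step_bound h0 hq hi.2.1 hi1.2.1 ?_ hi.2.2.1 hi1.2.2.2 (h3 (i + 1) (by omega)) j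
        intro j hj
        rw [hi.2.2.2 j hj]
        simp [pow_nonneg h0.le]

/-- Passing the test for all levels in between prolongs the initial piece. -/
lemma Pre.upto {q : ℝ} (h0 : 0 < q) (hq : q ≤ 1 / 6) {col : (Fin n → ℝ) → Fin N} {l : ℕ}
    {J : Finset (Fin n)} {z : Fin n → ℝ} {c : Fin N} {k : Fin n}
    (h : Pre q col l J z c k) (m : ℕ) (hp : ∀ i, l ≤ i → i < l + m → Pass q col J z i c k) :
    Pre q col (l + m) J z c k := by
  induction m with
  | zero => exact h
  | succ m ih =>
    have h1 := ih (fun i hi hi' => hp i hi (by omega))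
    obtain ⟨y, hy1, hy2, hy3, hy4⟩ := hp (l + m) (by omega) (by omega)
    have hpos : 0 < q ^ (l + m) := pow_pos h0 _
    refine h1.extend h0 hq y hy1 hy2 hy4 ?_ rfl ?_ hy3
    · intro j hj hjk
      have := hy3 j hj hjk
      linarith
    · intro j hj
      rw [hy4 j hj]; simp [hpos.le]

/-- The new base point. -/
def newBase (q : ℝ) (l : ℕ) (J D B : Finset (Fin n)) (z : Fin n → ℝ) : Fin n → ℝ := fun j =>
  if j ∈ D then z j - gR q l else if j ∈ J ∧ j ∉ B then z j - q ^ l / 2 else z j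

/-- The wide test for colour `d` and direction `k ∈ B`: the set of admissible points. -/
def Wide (q : ℝ) (l : ℕ) (J D B : Finset (Fin n)) (z : Fin n → ℝ) (k : Fin n)
    (x : Fin n → ℝ) : Prop :=
  x k = z k - gR q l ∧ (∀ j ∈ B, j ≠ k → |x j - z j| ≤ q ^ l / 2) ∧
    (∀ j ∉ B, |x j - newBase q l J D B z j| ≤ q ^ l) ∧ (∀ j ∉ J, x j = z j)

lemma block_step {q : ℝ} (h0 : 0 < q) (hq : q ≤ 1 / 6) {col : (Fin n → ℝ) → Fin N} {l : ℕ}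
    {J D B : Finset (Fin n)} {z : Fin n → ℝ} {Y : Finset (Fin N)}
    (hDJ : D ⊆ J) (hBJ : B ⊆ J) (hDB : Disjoint D B)
    (hpre : ∀ c ∈ Y, ∀ k ∈ J, Pre q col l J z c k)
    (hK : ∀ y : Fin n → ℝ, (∀ j ∉ B, y j = newBase q l J D B z j) →
      (∀ j ∈ B, |y j - z j| ≤ q ^ l / 2) → col y ∈ Y) :
    (Reg q col (l + 1) Y B (newBase q l J D B z) ∧
      ∀ c ∈ Y, ∀ k ∈ B, Pre q col (l + 1) B (newBase q l J D B z) c k) ∨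
    ∃ d ∈ Y, ∃ k ∈ B, ∀ x, Wide q l J D B z k x → col x ≠ d := by
  by_cases hf : ∃ d ∈ Y, ∃ k ∈ B, ∀ x, Wide q l J D B z k x → col x ≠ d
  · exact Or.inr hf
  left
  push Not at hf
  have hpos : 0 < q ^ l := pow_pos h0 _
  have hnB : ∀ j ∈ B, newBase q l J D B z j = z j := by
    intro j hj
    have : j ∉ D := fun h => (Finset.disjoint_left.mp hDB h) hj
    simp [newBase, this, hj]
  obtain ⟨hb1, hb2⟩ := gR_bounds h0 hq l
  have hnear : ∀ j, |newBase q l J D B z j - z j| ≤ 3 / 2 * q ^ l := by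
    intro j
    unfold newBase
    split_ifs
    · rw [abs_le]; constructor <;> linarith
    · rw [abs_le]; constructor <;> linarith
    · simp [hpos.le]
  constructor
  · intro y hy1 hy2
    refine hK y hy1 ?_
    intro j hj
    have := hy2 j hj
    rw [hnB j hj] at this
    have h3 : q ^ (l + 1) ≤ q ^ l / 6 := by rw [pow_succ]; nlinarith
    linarith
  · intro c hc k hk
    obtain ⟨x, ⟨hx1, hx2, hx3, hx4⟩, hxc⟩ := hf c hc k hk
    refine (hpre c hc k (hBJ hk)).extend h0 hq x hxc hx1 hx4 ?_ (hnB k hk) hx3 ?_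
    · intro j hj hjk
      by_cases hjB : j ∈ B
      · have := hx2 j hjB hjk
        linarith
      · have h1 := hx3 j hjB
        have h2 := hnear j
        have h3 := abs_sub_le (x j) (newBase q l J D B z j) (z j)
        linarith
    · intro j hj hjk
      rw [hnB j hj]; exact hx2 j hj hjk

/-- A failing wide test excludes the colour from the next wide region. -/
lemma wide_of {q : ℝ} (h0 : 0 < q) (hq : q ≤ 1 / 6) {l : ℕ}
    {J D B R : Finset (Fin n)} {z : Fin n → ℝ} {k : Fin n}
    (hDJ : D ⊆ J) (hBJ : B ⊆ J) (hDB : Disjoint D B) (hRJ : R ⊆ J)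
    (hDR : Disjoint D R) (hBR : Disjoint B R) (hk : k ∈ B)
    {y : Fin n → ℝ} (hy1 : ∀ j ∉ R, y j = newBase q l J (insert k D) R z j)
    (hy2 : ∀ j ∈ R, |y j - (z j - q ^ l / 2)| ≤ q ^ l) : Wide q l J D B z k y := by
  have hpos : 0 < q ^ l := pow_pos h0 _
  have hkR : k ∉ R := fun h => Finset.disjoint_left.mp hBR hk h
  refine ⟨?_, ?_, ?_, ?_⟩
  · rw [hy1 k hkR]; simp [newBase]
  · intro j hj hjk
    have hjR : j ∉ R := fun h => Finset.disjoint_left.mp hBR hj h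
    have hjD : j ∉ D := fun h => Finset.disjoint_left.mp hDB h hj
    rw [hy1 j hjR]
    simp only [newBase, Finset.mem_insert, hjk, hjD, or_self, if_false, hBJ hj, hjR,
      not_false_eq_true, and_self, if_true]
    rw [abs_le]; constructor <;> linarith
  · intro j hj
    have hjk : j ≠ k := fun h => hj (h ▸ hk)
    by_cases hjR : j ∈ R
    · have hjD : j ∉ D := fun h => Finset.disjoint_left.mp hDR h hjR
      have := hy2 j hjR
      simpa [newBase, hjD, hRJ hjR, hj] using this
    · rw [hy1 j hjR]
      have : newBase q l J (insert k D) R z j = newBase q l J D B z j := by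
        simp [newBase, hjk, hjR, hj]
      rw [this]; simp [hpos.le]
  · intro j hj
    have hjR : j ∉ R := fun h => hj (hRJ h)
    have hjD : j ∉ D := fun h => hj (hDJ h)
    have hjk : j ≠ k := fun h => hj (h ▸ hBJ hk)
    rw [hy1 j hjR]
    simp [newBase, hjk, hjD, hj]

/-- The main induction hypothesis: states with at most `M` colours are winning. -/
def Win (q : ℝ) (col : (Fin n → ℝ) → Fin N) (M : ℕ) : Prop :=
  ∀ (C : Finset (Fin N)) (l : ℕ) (J : Finset (Fin n)) (z : Fin n → ℝ), C.card < M →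
    3 ^ C.card ≤ J.card → Reg q col l C J z → (∀ c ∈ C, ∀ k ∈ J, Pre q col l J z c k) →
    ∃ i : Fin N, HasCopy (geomSet q) {x | col x = i}

lemma inner {q : ℝ} (h0 : 0 < q) (hq : q ≤ 1 / 6) {col : (Fin n → ℝ) → Fin N} {l M : ℕ}
    {J : Finset (Fin n)} {z : Fin n → ℝ} (hwin : Win q col M) (m : ℕ) :
    ∀ (Y : Finset (Fin N)) (D R : Finset (Fin n)), Y.card = m → m < M →
    (∀ c ∈ Y, ∀ k ∈ J, Pre q col l J z c k) →
    D ⊆ J → R ⊆ J → Disjoint D R → 2 * 3 ^ m ≤ R.card + 1 →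
    (∀ y : Fin n → ℝ, (∀ j ∉ R, y j = newBase q l J D R z j) →
      (∀ j ∈ R, |y j - (z j - q ^ l / 2)| ≤ q ^ l) → col y ∈ Y) →
    ∃ i : Fin N, HasCopy (geomSet q) {x | col x = i} := by
  have hpos : 0 < q ^ l := pow_pos h0 _
  obtain ⟨hb1, hb2⟩ := gR_bounds h0 hq l
  induction m with
  | zero =>
    intro Y D R hY _ _ _ _ _ _ hK
    exfalso
    have := hK (fun j => if j ∈ R then z j - q ^ l / 2 else newBase q l J D R z j)
      (fun j hj => by simp [hj]) (fun j hj => by simp [hj, hpos.le])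
    rw [Finset.card_eq_zero.mp hY] at this
    simp at this
  | succ m ih =>
    intro Y D R hY hmM hpre hDJ hRJ hDR hcard hK
    have hp1 : 1 ≤ 3 ^ m := Nat.one_le_pow _ _ (by norm_num)
    have hp2 : 3 ^ (m + 1) = 3 * 3 ^ m := by rw [pow_succ]; ring
    obtain ⟨B, hBR, hBc⟩ := Finset.exists_subset_card_eq (s := R) (n := 3 ^ (m + 1)) (by omega)
    have hBJ := hBR.trans hRJ
    have hDB : Disjoint D B := Finset.disjoint_of_subset_right hBR hDR
    have hKB : ∀ y : Fin n → ℝ, (∀ j ∉ B, y j = newBase q l J D B z j) →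
        (∀ j ∈ B, |y j - z j| ≤ q ^ l / 2) → col y ∈ Y := by
      intro y hy1 hy2
      apply hK y
      · intro j hj
        have hjB : j ∉ B := fun h => hj (hBR h)
        rw [hy1 j hjB]
        simp [newBase, hj, hjB]
      · intro j hj
        by_cases hjB : j ∈ B
        · have := hy2 j hjB
          rw [abs_le] at *
          constructor <;> linarith [this.1, this.2]
        · rw [hy1 j hjB]
          have hjD : j ∉ D := fun h => Finset.disjoint_left.mp hDR h hj
          simp [newBase, hjD, hRJ hj, hjB, hpos.le]
    rcases block_step h0 hq (col := col) (l := l) (z := z) (Y := Y) hDJ hBJ hDB hpre hKB with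
      ⟨h1, h2⟩ | ⟨d, hd, k, hk, hfail⟩
    · exact hwin Y (l + 1) B _ (by omega) (by rw [hY, hBc]) h1 h2
    · have hkD : k ∉ D := fun h => Finset.disjoint_left.mp hDB h hk
      have hDR' : Disjoint D (R \ B) := Finset.disjoint_of_subset_right Finset.sdiff_subset hDR
      have hBR' : Disjoint B (R \ B) := Finset.disjoint_sdiff
      have hRJ' : R \ B ⊆ J := Finset.sdiff_subset.trans hRJ
      refine ih (Y.erase d) (insert k D) (R \ B) ?_ (by omega) ?_ ?_ hRJ' ?_ ?_ ?_
      · rw [Finset.card_erase_of_mem hd]; omega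
      · exact fun c hc => hpre c (Finset.mem_of_mem_erase hc)
      · exact Finset.insert_subset (hBJ hk) hDJ
      · rw [Finset.disjoint_insert_left]
        exact ⟨fun h => Finset.disjoint_left.mp hBR' hk h, hDR'⟩
      · rw [Finset.card_sdiff_of_subset hBR, hBc]; omega
      · intro y hy1 hy2
        refine Finset.mem_erase.mpr ⟨hfail y
          (wide_of h0 hq hDJ hBJ hDB hRJ' hDR' hBR' hk hy1 hy2), ?_⟩
        apply hK y
        · intro j hj
          have hjB : j ∉ B := fun h => hj (hBR h)
          have hjk : j ≠ k := fun h => hjB (h ▸ hk)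
          rw [hy1 j (by simp [hj])]
          simp [newBase, hjk, hj]
        · intro j hj
          by_cases hjB : j ∈ B
          · rw [hy1 j (by simp [hjB])]
            have hjD : j ∉ D := fun h => Finset.disjoint_left.mp hDB h hjB
            by_cases hjk : j = k
            · subst hjk
              simp only [newBase, Finset.mem_insert_self, if_true]
              rw [abs_le]; constructor <;> linarith
            · simp [newBase, hjk, hjD, hRJ hj, hjB, hpos.le]
          · exact hy2 j (by simp [hj, hjB])

lemma win_all {q : ℝ} (h0 : 0 < q) (hq : q ≤ 1 / 6) {col : (Fin n → ℝ) → Fin N} (M : ℕ) :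
    Win q col M := by
  induction M with
  | zero => intro C l J z h; omega
  | succ M ih =>
    intro C l J z hCM hcard hreg hpre
    by_cases hlt : C.card < M
    · exact ih C l J z hlt hcard hreg hpre
    have hCM : C.card = M := by omega
    have hCne : col z ∈ C := hreg z (fun _ _ => rfl)
      (fun j _ => by simp [pow_nonneg h0.le])
    have hMpos : 0 < M := by rw [← hCM]; exact Finset.card_pos.mpr ⟨_, hCne⟩
    obtain ⟨K, rfl⟩ : ∃ K, M = K + 1 := ⟨M - 1, by omega⟩
    have hJne : J.Nonempty := by
      rw [← Finset.card_pos]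
      exact lt_of_lt_of_le (by positivity) hcard
    by_cases hall : ∀ m, ∀ c ∈ C, ∀ k ∈ J, Pass q col J z (l + m) c k
    · obtain ⟨k, hk⟩ := hJne
      refine ⟨col z, copy_of_pass h0 hq (hpre _ hCne k hk) ?_⟩
      intro i hi
      obtain ⟨m, rfl⟩ := Nat.exists_eq_add_of_le hi
      exact hall m _ hCne k hk
    push Not at hall
    classical
    set m := Nat.find hall with hm
    have hmin : ∀ m' < m, ∀ c ∈ C, ∀ k ∈ J, Pass q col J z (l + m') c k := by
      intro m' hm' c hc k hk
      have := Nat.find_min hall hm'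
      push Not at this
      exact this c hc k hk
    obtain ⟨c0, hc0, k0, hk0, hfail0⟩ := Nat.find_spec hall
    rw [← hm] at hfail0
    have hpre' : ∀ c ∈ C, ∀ k ∈ J, Pre q col (l + m) J z c k := by
      intro c hc k hk
      refine (hpre c hc k hk).upto h0 hq m ?_
      intro i hi hi'
      obtain ⟨m', rfl⟩ := Nat.exists_eq_add_of_le hi
      exact hmin m' (by omega) c hc k hk
    have hreg' : Reg q col (l + m) C J z := by
      intro y hy1 hy2
      refine hreg y hy1 (fun j hj => (hy2 j hj).trans ?_)
      have : q ^ (l + m) ≤ q ^ l := pow_le_pow_of_le_one h0.le (by linarith) (by omega)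
      linarith
    clear hpre hreg hmin
    generalize l + m = L at hpre' hreg' hfail0
    have hpos : 0 < q ^ L := pow_pos h0 _
    obtain ⟨hb1, hb2⟩ := gR_bounds h0 hq L
    have hp1 : 1 ≤ 3 ^ K := Nat.one_le_pow _ _ (by norm_num)
    have hp2 : 3 ^ (K + 1) = 3 * 3 ^ K := by rw [pow_succ]; ring
    rw [hCM] at hcard
    have hec : (J.erase k0).card = J.card - 1 := Finset.card_erase_of_mem hk0
    obtain ⟨B, hBe, hBc⟩ := Finset.exists_subset_card_eq (s := J.erase k0) (n := 3 ^ K) (by omega)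
    have hBJ : B ⊆ J := hBe.trans (Finset.erase_subset _ _)
    have hk0B : k0 ∉ B := fun h => by simpa using hBe h
    have hDJ : {k0} ⊆ J := by simpa using hk0
    have hDB : Disjoint {k0} B := by simpa using hk0B
    have hKB : ∀ y : Fin n → ℝ, (∀ j ∉ B, y j = newBase q L J {k0} B z j) →
        (∀ j ∈ B, |y j - z j| ≤ q ^ L / 2) → col y ∈ C.erase c0 := by
      intro y hy1 hy2
      have hyJ : ∀ j ∉ J, y j = z j := by
        intro j hj
        have hjB : j ∉ B := fun h => hj (hBJ h)
        have hjk0 : j ≠ k0 := fun h => hj (h ▸ hk0)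
        rw [hy1 j hjB]
        simp [newBase, hjk0, hj]
      have hyk0 : y k0 = z k0 - gR q L := by
        rw [hy1 k0 hk0B]; simp [newBase]
      have hyH : ∀ j ∈ J, j ≠ k0 → |y j - z j| ≤ q ^ L / 2 := by
        intro j hj hjk0
        by_cases hjB : j ∈ B
        · exact hy2 j hjB
        · rw [hy1 j hjB]
          simp only [newBase, Finset.mem_singleton, hjk0, if_false, hj, hjB, not_false_eq_true,
            and_self, if_true]
          rw [abs_le]; constructor <;> linarith
      refine Finset.mem_erase.mpr ⟨fun h => hfail0 ⟨y, h, hyk0, hyH, hyJ⟩, ?_⟩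
      refine hreg' y hyJ ?_
      intro j hj
      by_cases hjk0 : j = k0
      · subst hjk0
        rw [hyk0, abs_le]; constructor <;> linarith
      · have := hyH j hj hjk0
        linarith
    rcases block_step h0 hq (col := col) (l := L) (z := z) (Y := C.erase c0) hDJ hBJ hDB
      (fun c hc => hpre' c (Finset.mem_of_mem_erase hc)) hKB with
      ⟨h1, h2⟩ | ⟨d, hd, k, hk, hfail⟩
    · have hcc : (C.erase c0).card = K := by rw [Finset.card_erase_of_mem hc0]; omega
      exact ih (C.erase c0) (L + 1) B _ (by omega) (by rw [hcc, hBc]) h1 h2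
    · have hdC := Finset.mem_of_mem_erase hd
      set R := (J.erase k0) \ B with hR
      have hRJ : R ⊆ J := Finset.sdiff_subset.trans (Finset.erase_subset _ _)
      have hBR : Disjoint B R := Finset.disjoint_sdiff
      have hDR : Disjoint {k0} R := by simp [hR]
      refine inner h0 hq (l := L) (J := J) (z := z) ih K (C.erase d) (insert k {k0}) R
        ?_ (by omega) (fun c hc => hpre' c (Finset.mem_of_mem_erase hc)) ?_ hRJ ?_ ?_ ?_
      · rw [Finset.card_erase_of_mem hdC]; omega
      · exact Finset.insert_subset (hBJ hk) hDJ
      · rw [Finset.disjoint_insert_left]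
        exact ⟨fun h => Finset.disjoint_left.mp hBR hk h, hDR⟩
      · rw [hR, Finset.card_sdiff_of_subset hBe, hBc, hec]; omega
      · intro y hy1 hy2
        refine Finset.mem_erase.mpr ⟨hfail y
          (wide_of h0 hq hDJ hBJ hDB hRJ hDR hBR hk hy1 hy2), ?_⟩
        apply hreg' y
        · intro j hj
          have hjR : j ∉ R := fun h => hj (hRJ h)
          have hjk : j ≠ k := fun h => hj (h ▸ hBJ hk)
          have hjk0 : j ≠ k0 := fun h => hj (h ▸ hk0)
          rw [hy1 j hjR]
          simp [newBase, hjk, hjk0, hj]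
        · intro j hj
          by_cases hjR : j ∈ R
          · have := hy2 j hjR
            rw [abs_le] at *
            constructor <;> linarith [this.1, this.2]
          · rw [hy1 j hjR]
            unfold newBase
            split_ifs
            · rw [abs_le]; constructor <;> linarith
            · rw [abs_le]; constructor <;> linarith
            · simp [hpos.le]

end ChiGeom

/-- There is `q₀ > 0` such that for all `0 < q ≤ q₀` and all `n`,
`χ(ℝ^n_∞, G(q)) > log₃ n`: every colouring of `ℝ^n` (max metric) with at most
`log₃ n` colours has a monochromatic isometric copy of `G(q)`. -/
theorem chi_geom_gt_log :
    ∃ q0 : ℝ, 0 < q0 ∧ ∀ q : ℝ, 0 < q → q ≤ q0 → ∀ n N : ℕ,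
      (N : ℝ) ≤ Real.logb 3 n →
        ∀ c : (Fin n → ℝ) → Fin N, ∃ i : Fin N, HasCopy (geomSet q) {x | c x = i} := by
  refine ⟨1 / 6, by norm_num, ?_⟩
  intro q h0 hq n N hN c
  have hNpos : 0 < N := lt_of_le_of_lt (Nat.zero_le _) (c 0).2
  have hn : 0 < n := by
    rcases Nat.eq_zero_or_pos n with h | h
    · subst h
      simp only [Nat.cast_zero, Real.logb_zero] at hN
      have : (0 : ℝ) < N := by exact_mod_cast hNpos
      linarith
    · exact h
  have hle : 3 ^ N ≤ n := by
    rw [Real.le_logb_iff_rpow_le (by norm_num) (by exact_mod_cast hn), Real.rpow_natCast] at hN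
    exact_mod_cast hN
  refine win_all h0 hq (col := c) (N + 1) Finset.univ 0 Finset.univ 0 (by simp) (by simpa using hle)
    (fun y _ _ => Finset.mem_univ _) ?_
  intro d _ k _
  exact ⟨fun _ => 0, fun i hi => absurd hi (by omega), fun i hi => absurd hi (by omega),
    fun i hi => absurd hi (by omega)⟩
end

section
/- Let n ∈ ℕ and let H ⊂ ℝ^n be the set of all 2^n vertices of an axis-parallel n-dimensional hyperrectangle with positive side lengths, i.e., H = {a_1, b_1} × ⋯ × {a_n, b_n} with a_i < b_i for every i, equipped with the max-norm metric. Then H cannot be isometrically embedded into ℝ^{n−1}_∞: there is no distance-preserving injection from H into ℝ^{n−1} with the max-norm metric. -/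
open Set Filter

/-- A finite ultrametric family embedded isometrically in `ℝ^m` with the max metric
has at most `2^m` points. -/
lemma ultra_card {S : Type*} [Fintype S] (m : ℕ) (d : S → S → ℝ)
    (hpos : ∀ s t, s ≠ t → 0 < d s t) (hsymm : ∀ s t, d s t = d t s)
    (hult : ∀ s t u, d s u ≤ max (d s t) (d t u))
    (F : S → Fin m → ℝ) (hF : ∀ s t, dist (F s) (F t) = d s t) :
    Fintype.card S ≤ 2 ^ m := by
  classical
  let φ : S → Fin m → Bool := fun s j => decide (∃ t, t ≠ s ∧ F t j - F s j = d s t)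
  have key : ∀ s t j, s ≠ t → F t j - F s j = d s t → φ s ≠ φ t := by
    intro s t j hst h heq
    have h1 : φ s j = true := decide_eq_true ⟨t, hst.symm, h⟩
    rw [heq] at h1
    obtain ⟨u, hu, h2⟩ := of_decide_eq_true h1
    have h3 : F u j - F s j ≤ d s u := by
      rw [← hF s u, dist_comm]
      exact (le_abs_self _).trans (dist_le_pi_dist (F u) (F s) j)
    have p1 := hpos s t hst
    have p2 := hpos t u hu.symm
    rcases le_max_iff.mp (hult s t u) with h4 | h4 <;> linarith
  have inj : Function.Injective φ := by
    intro s t heq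
    by_contra hst
    have hex : ∃ j, d s t ≤ dist (F s j) (F t j) := by
      by_contra hcon
      push Not at hcon
      have := (dist_pi_lt_iff (hpos s t hst)).2 hcon
      rw [hF] at this
      exact lt_irrefl _ this
    obtain ⟨j, hj⟩ := hex
    have hle : dist (F s j) (F t j) ≤ d s t := hF s t ▸ dist_le_pi_dist (F s) (F t) j
    have he := le_antisymm hle hj
    rw [Real.dist_eq] at he
    rcases abs_choice (F s j - F t j) with h | h
    · exact key t s j (Ne.symm hst) (by rw [← hsymm s t]; linarith) heq.symm
    · exact key s t j hst (by linarith) heq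
  simpa using Fintype.card_le_of_injective φ inj

/-- The vertex set of an `n`-dimensional axis-parallel hyperrectangle (with positive
side lengths) in `ℝ^n` with the max metric cannot be isometrically embedded into
`ℝ^(n-1)` with the max metric. -/
theorem hyperrectangle_not_embed (n : ℕ) (hn : 0 < n) (a b : Fin n → ℝ)
    (hab : ∀ i, a i < b i) :
    ¬ ∃ f : (Fin n → ℝ) → (Fin (n - 1) → ℝ),
        ∀ x ∈ {x : Fin n → ℝ | ∀ i, x i = a i ∨ x i = b i},
          ∀ y ∈ {x : Fin n → ℝ | ∀ i, x i = a i ∨ x i = b i},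
            dist (f x) (f y) = dist x y := by
  rintro ⟨f, hf⟩
  let g : (Fin n → Bool) → Fin n → ℝ := fun s i => if s i = true then b i else a i
  have hg : ∀ s, g s ∈ {x : Fin n → ℝ | ∀ i, x i = a i ∨ x i = b i} := by
    intro s i
    by_cases h : s i = true <;> simp [g, h]
  have ginj : ∀ s t, s ≠ t → g s ≠ g t := by
    intro s t hst h
    apply hst
    funext i
    have h1 := congrFun h i
    have h2 := hab i
    cases hs : s i <;> cases ht : t i <;> simp [g, hs, ht] at h1 ⊢ <;> linarith
  have h := ultra_card (n - 1) (fun s t => dist (g s) (g t))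
    (fun s t hst => dist_pos.2 (ginj s t hst)) (fun s t => dist_comm _ _)
    (by
      intro s t u
      refine (dist_pi_le_iff (le_max_of_le_left dist_nonneg)).2 fun i => ?_
      by_cases h : s i = t i
      · have : g s i = g t i := by simp [g, h]
        rw [this]
        exact le_max_of_le_right (dist_le_pi_dist (g t) (g u) i)
      · by_cases h' : t i = u i
        · have : g u i = g t i := by simp [g, h']
          rw [this]
          exact le_max_of_le_left (dist_le_pi_dist (g s) (g t) i)
        · have h3 : s i = u i := by
            revert h h'
            cases s i <;> cases t i <;> cases u i <;> simp
          have : g s i = g u i := by simp [g, h3]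
          rw [this, dist_self]
          exact le_max_of_le_left dist_nonneg)
    (fun s => f (g s)) (fun s t => hf _ (hg s) _ (hg t))
  simp only [Fintype.card_fun, Fintype.card_bool, Fintype.card_fin] at h
  have := (Nat.pow_le_pow_iff_right (by norm_num : 1 < 2)).1 h
  omega
end

section
/- Let B = B(λ_1,…,λ_k) be an arbitrary baton and let X ⊂ ℝ be a finite set. Then for all n ∈ ℕ, α(X^n, B) = α_tr(X, B)^n, where X^n ⊆ ℝ^n carries the max-norm metric; i.e., the maximum cardinality of a subset of X^n containing no isometric copy of B equals the n-th power of the maximum cardinality of a B-tr-free subset of X. -/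
open Set Filter

/-- The baton `B(λ₁,…,λ_k)`: the set of partial sums `σ₀,…,σ_k` of `λ₁,…,λ_k`. -/
noncomputable def baton (lam : ℕ → ℝ) (k : ℕ) : Set ℝ :=
  (fun r => ∑ j ∈ Finset.range r, lam j) '' Set.Iic k

/-- A weighted Mirsky lemma: a large finite set has a large antichain or a long chain. -/
lemma mirsky_aux {α : Type*} [DecidableEq α] (r : α → α → Prop) (htr : ∀ x y z, r x y → r y z → r x z)
    (hirr : ∀ x, ¬ r x x) (q : ℕ) : ∀ (m : ℕ) (Y : Finset α), m * q < Y.card →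
    (∃ A ⊆ Y, q < A.card ∧ ∀ x ∈ A, ∀ y ∈ A, ¬ r x y) ∨
    (∃ C ⊆ Y, C.card = m + 1 ∧ (∀ x ∈ C, ∀ y ∈ C, x ≠ y → r x y ∨ r y x) ∧
      ∃ x ∈ C, ∀ y ∈ C, y ≠ x → r x y) := by
  classical
  intro m
  induction m with
  | zero =>
    intro Y hY
    right
    have : 0 < Y.card := by omega
    obtain ⟨x, hx⟩ := Finset.card_pos.1 this
    refine ⟨{x}, by simpa using hx, by simp, ?_, x, by simp, ?_⟩
    · intro a ha b hb hab
      simp at ha hb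
      exact absurd (ha.trans hb.symm) hab
    · intro y hy hne
      simp at hy
      exact absurd hy hne
  | succ m ih =>
    intro Y hY
    let M := Y.filter (fun x => ∀ z ∈ Y, ¬ r z x)
    by_cases hM : q < M.card
    · left
      refine ⟨M, Finset.filter_subset _ _, hM, ?_⟩
      intro x hx y hy
      exact (Finset.mem_filter.1 hy).2 x (Finset.mem_filter.1 hx).1
    · have hc : (Y \ M).card + M.card = Y.card :=
        Finset.card_sdiff_add_card_eq_card (Finset.filter_subset _ _)
      have h1 : m * q < (Y \ M).card := by
        have : (m + 1) * q = m * q + q := by ring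
        omega
      rcases ih _ h1 with ⟨A, hA, h2, h3⟩ | ⟨C, hC, h2, h3, x, hx, h4⟩
      · exact Or.inl ⟨A, hA.trans Finset.sdiff_subset, h2, h3⟩
      · right
        have hxY := hC hx
        have : ∃ z ∈ Y, r z x := by
          by_contra! hcon
          rw [Finset.mem_sdiff] at hxY
          exact hxY.2 (Finset.mem_filter.2 ⟨hxY.1, hcon⟩)
        obtain ⟨z, hz, hzx⟩ := this
        have hzC : ∀ y ∈ C, r z y := by
          intro y hy
          by_cases hyx : y = x
          · exact hyx ▸ hzx
          · exact htr _ _ _ hzx (h4 y hy hyx)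
        have hzn : z ∉ C := fun h => hirr z (hzC z h)
        refine ⟨insert z C, ?_, ?_, ?_, z, by simp, ?_⟩
        · exact Finset.insert_subset hz (hC.trans Finset.sdiff_subset)
        · rw [Finset.card_insert_of_notMem hzn, h2]
        · intro a ha b hb hab
          rcases Finset.mem_insert.1 ha with rfl | ha'
          · rcases Finset.mem_insert.1 hb with rfl | hb
            · exact absurd rfl hab
            · exact Or.inl (hzC b hb)
          · rcases Finset.mem_insert.1 hb with rfl | hb
            · exact Or.inr (hzC a ha')
            · exact h3 a ha' b hb hab
        · intro y hy hyz
          rcases Finset.mem_insert.1 hy with rfl | hy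
          · exact absurd rfl hyz
          · exact hzC y hy

/-- Copies lift along maps preserving distances. -/
lemma HasCopy.lift {α β γ : Type*} [MetricSpace α] [MetricSpace β] [MetricSpace γ] {M : Set α}
    {A : Set β} (φ : β → γ) (hφ : ∀ x ∈ A, ∀ y ∈ A, dist (φ x) (φ y) = dist x y)
    (hne : A.Nonempty) (h : HasCopy M (φ '' A)) : HasCopy M A := by
  classical
  obtain ⟨f, hf, hsub⟩ := h
  obtain ⟨a0, ha0⟩ := hne
  have : ∀ s, ∃ a ∈ A, s ∈ M → φ a = f s := by
    intro s
    by_cases hs : s ∈ M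
    · obtain ⟨a, ha, h⟩ := hsub (mem_image_of_mem f hs)
      exact ⟨a, ha, fun _ => h⟩
    · exact ⟨a0, ha0, fun h => absurd h hs⟩
  choose g hg hg' using this
  refine ⟨g, ?_, ?_⟩
  · intro x hx y hy
    rw [← hφ _ (hg x) _ (hg y), hg' x hx, hg' y hy, hf x hx y hy]
  · rintro _ ⟨s, -, rfl⟩
    exact hg s

/-- The strict timelike order with respect to coordinate zero. -/
def tl {n : ℕ} (p q : Fin (n + 1) → ℝ) : Prop :=
  p 0 < q 0 ∧ ∀ i : Fin n, |p i.succ - q i.succ| < q 0 - p 0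

lemma tl_trans {n : ℕ} (p q s : Fin (n + 1) → ℝ) (h1 : tl p q) (h2 : tl q s) : tl p s := by
  refine ⟨h1.1.trans h2.1, fun i => ?_⟩
  have := h1.2 i
  have := h2.2 i
  have := abs_sub_le (p i.succ) (q i.succ) (s i.succ)
  linarith

lemma tl_dist {n : ℕ} (p q : Fin (n + 1) → ℝ) (h : tl p q) : dist (p 0) (q 0) = dist p q := by
  apply le_antisymm (dist_le_pi_dist p q 0)
  rw [dist_pi_le_iff dist_nonneg]
  intro i
  refine Fin.cases le_rfl (fun i => ?_) i
  rw [Real.dist_eq, Real.dist_eq, abs_sub_comm (p 0), abs_of_pos (sub_pos.2 h.1)]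
  exact (h.2 i).le

lemma not_tl_le {n : ℕ} (p q : Fin (n + 1) → ℝ) (h : ¬ tl p q) :
    q 0 - p 0 ≤ dist (Fin.tail p) (Fin.tail q) := by
  by_cases h0 : p 0 < q 0
  · have : ∃ i : Fin n, q 0 - p 0 ≤ |p i.succ - q i.succ| := by
      by_contra! hc
      exact h ⟨h0, hc⟩
    obtain ⟨i, hi⟩ := this
    exact hi.trans (dist_le_pi_dist (Fin.tail p) (Fin.tail q) i)
  · have := dist_nonneg (x := Fin.tail p) (y := Fin.tail q)
    linarith

lemma not_tl_dist {n : ℕ} (p q : Fin (n + 1) → ℝ) (h : ¬ tl p q) (h' : ¬ tl q p) :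
    dist (Fin.tail p) (Fin.tail q) = dist p q := by
  apply le_antisymm
  · rw [dist_pi_le_iff dist_nonneg]
    intro i
    exact dist_le_pi_dist p q i.succ
  · rw [dist_pi_le_iff dist_nonneg]
    intro i
    refine Fin.cases ?_ (fun i => ?_) i
    · rw [Real.dist_eq, abs_le]
      have h1 := not_tl_le p q h
      have h2 := not_tl_le q p h'
      rw [dist_comm] at h2
      constructor <;> linarith
    · exact dist_le_pi_dist (Fin.tail p) (Fin.tail q) i

/-- Upper bound. -/
lemma upper_aux (B : Set ℝ) (X : Set ℝ) (a : ℕ)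
    (ha : ∀ A ⊆ X, a < A.ncard → HasCopy B A) : ∀ (n : ℕ) (Y : Finset (Fin n → ℝ)),
    (∀ y ∈ Y, ∀ i, y i ∈ X) → a ^ n < Y.card → HasCopy B (Y : Set (Fin n → ℝ)) := by
  classical
  intro n
  induction n with
  | zero =>
    intro Y _ h
    have : Y.card ≤ 1 := Finset.card_le_one_of_subsingleton Y
    simp at h
    omega
  | succ n ih =>
    intro Y hY h
    have mono : ∀ A ⊆ Y, HasCopy B (A : Set (Fin (n + 1) → ℝ)) →
        HasCopy B (Y : Set (Fin (n + 1) → ℝ)) := by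
      rintro A hA ⟨f, hf, hs⟩
      exact ⟨f, hf, hs.trans (by exact_mod_cast hA)⟩
    rw [pow_succ, mul_comm] at h
    rcases mirsky_aux tl tl_trans (fun x hx => lt_irrefl _ hx.1) (a ^ n) a Y h with
      ⟨A, hA, h2, h3⟩ | ⟨C, hC, h2, h3, x, hx, -⟩
    · apply mono A hA
      have hd : ∀ x ∈ (A : Set (Fin (n + 1) → ℝ)), ∀ y ∈ (A : Set (Fin (n + 1) → ℝ)),
          dist (Fin.tail x : Fin n → ℝ) (Fin.tail y) = dist x y :=
        fun x hx y hy => not_tl_dist x y (h3 x hx y hy) (h3 y hy x hx)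
      refine HasCopy.lift (fun p => (Fin.tail p : Fin n → ℝ)) hd ?_ ?_
      · have : 0 < A.card := by omega
        exact_mod_cast Finset.card_pos.1 this
      · have := ih (A.image (fun p => (Fin.tail p : Fin n → ℝ))) ?_ ?_
        · simpa using this
        · intro y hy i
          obtain ⟨p, hp, rfl⟩ := Finset.mem_image.1 hy
          exact hY p (hA hp) i.succ
        · rw [Finset.card_image_of_injOn]
          · exact h2
          · intro x hx y hy hxy
            have := hd x hx y hy
            simp only at hxy
            rw [hxy, dist_self] at this
            exact dist_eq_zero.1 this.symm
    · apply mono C hC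
      have hd : ∀ x ∈ (C : Set (Fin (n + 1) → ℝ)), ∀ y ∈ (C : Set (Fin (n + 1) → ℝ)),
          dist (x 0) (y 0) = dist x y := by
        intro x hx y hy
        by_cases hxy : x = y
        · simp [hxy]
        · rcases h3 x hx y hy hxy with h | h
          · exact tl_dist x y h
          · rw [dist_comm, dist_comm x y]
            exact tl_dist y x h
      refine HasCopy.lift (fun p => p 0) hd ⟨x, hx⟩ (ha _ ?_ ?_)
      · rintro _ ⟨p, hp, rfl⟩
        exact hY p (hC hp) 0
      · rw [ncard_image_of_injOn, ncard_coe_finset, h2]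
        · omega
        · intro x hx y hy hxy
          have := hd x hx y hy
          simp only at hxy
          rw [hxy, dist_self] at this
          exact dist_eq_zero.1 this.symm

/-- Lower bound: powers of translation-free sets are copy-free. -/
lemma lower_aux (B : Set ℝ) (L : ℝ) (hL : 0 < L) (h0 : (0 : ℝ) ∈ B) (hLB : L ∈ B)
    (hB : ∀ s ∈ B, 0 ≤ s ∧ s ≤ L) (A : Set ℝ)
    (hA : ∀ t : ℝ, ¬ ((fun s => s + t) '' B ⊆ A) ∧ ¬ ((fun s => -s + t) '' B ⊆ A)) (n : ℕ) :
    ¬ HasCopy B {x : Fin n → ℝ | ∀ i, x i ∈ A} := by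
  rintro ⟨f, hf, hs⟩
  have hex : ∃ i, L ≤ |f L i - f 0 i| := by
    by_contra! hc
    have : dist (f L) (f 0) < L := (dist_pi_lt_iff hL).2 hc
    rw [hf L hLB 0 h0, Real.dist_eq, sub_zero, abs_of_pos hL] at this
    exact lt_irrefl _ this
  obtain ⟨i, hi⟩ := hex
  have h1 : ∀ s ∈ B, |f s i - f 0 i| ≤ s := by
    intro s hs'
    have := dist_le_pi_dist (f s) (f 0) i
    rwa [hf s hs' 0 h0, Real.dist_eq, Real.dist_eq, sub_zero, abs_of_nonneg (hB s hs').1] at this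
  have h2 : ∀ s ∈ B, |f L i - f s i| ≤ L - s := by
    intro s hs'
    have := dist_le_pi_dist (f L) (f s) i
    rwa [hf L hLB s hs', Real.dist_eq, Real.dist_eq,
      abs_of_nonneg (sub_nonneg.2 (hB s hs').2)] at this
  have hmem : ∀ s ∈ B, f s i ∈ A := fun s hs' => hs (mem_image_of_mem f hs') i
  rcases le_abs.1 hi with h | h
  · apply (hA (f 0 i)).1
    rintro _ ⟨s, hsB, rfl⟩
    have e1 := abs_le.1 (h1 s hsB)
    have e2 := abs_le.1 (h2 s hsB)
    have : s + f 0 i = f s i := by linarith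
    simp only [this]
    exact hmem s hsB
  · apply (hA (f 0 i)).2
    rintro _ ⟨s, hsB, rfl⟩
    have e1 := abs_le.1 (h1 s hsB)
    have e2 := abs_le.1 (h2 s hsB)
    have : -s + f 0 i = f s i := by linarith
    simp only [this]
    exact hmem s hsB

/-- For a baton `B` and a finite `X ⊆ ℝ`, `α(X^n, B) = α_tr(X, B)^n`: the maximum size
of a `B`-free subset of `X^n ⊆ ℝ^n` (max metric) is the `n`-th power of the maximum
size of a `B`-tr-free subset of `X`. -/
theorem alpha_power_eq (k : ℕ) (hk : 0 < k) (lam : ℕ → ℝ) (hpos : ∀ j < k, 0 < lam j)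
    (X : Set ℝ) (hX : X.Finite) (n : ℕ) (hn : 0 < n) :
    sSup {c : ℕ | ∃ Y ⊆ {x : Fin n → ℝ | ∀ i, x i ∈ X},
        Y.ncard = c ∧ ¬ HasCopy (baton lam k) Y}
  = (sSup {c : ℕ | ∃ A ⊆ X, A.ncard = c ∧
        ∀ t : ℝ, ¬ ((fun s => s + t) '' baton lam k ⊆ A) ∧
                 ¬ ((fun s => -s + t) '' baton lam k ⊆ A)}) ^ n := by
  classical
  set B := baton lam k with hBdef
  set L := ∑ j ∈ Finset.range k, lam j with hLdef
  have h0 : (0 : ℝ) ∈ B := ⟨0, by simp, by simp⟩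
  have hLB : L ∈ B := ⟨k, by simp, rfl⟩
  have hL : 0 < L := Finset.sum_pos (fun j hj => hpos j (Finset.mem_range.1 hj))
    ⟨0, Finset.mem_range.2 hk⟩
  have hB : ∀ s ∈ B, 0 ≤ s ∧ s ≤ L := by
    rintro _ ⟨r, hr, rfl⟩
    have hr' : r ≤ k := hr
    refine ⟨Finset.sum_nonneg fun j hj => (hpos j ?_).le, ?_⟩
    · have := Finset.mem_range.1 hj
      omega
    · refine Finset.sum_le_sum_of_subset_of_nonneg (Finset.range_mono hr') ?_
      intro j hj _
      exact (hpos j (Finset.mem_range.1 hj)).le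
  set S := {c : ℕ | ∃ A ⊆ X, A.ncard = c ∧
        ∀ t : ℝ, ¬ ((fun s => s + t) '' B ⊆ A) ∧ ¬ ((fun s => -s + t) '' B ⊆ A)} with hS
  have hSb : BddAbove S := by
    refine ⟨X.ncard, ?_⟩
    rintro _ ⟨A, hA, rfl, -⟩
    exact ncard_le_ncard hA hX
  have hSne : S.Nonempty := by
    refine ⟨0, ∅, empty_subset _, by simp, fun t => ⟨fun h => ?_, fun h => ?_⟩⟩
    · exact h (mem_image_of_mem _ h0)
    · exact h (mem_image_of_mem _ h0)
  have hup : ∀ A ⊆ X, sSup S < A.ncard → HasCopy B A := by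
    intro A hA hc
    by_contra hno
    refine absurd (le_csSup hSb (⟨A, hA, rfl, fun t => ⟨fun h => hno ?_, fun h => hno ?_⟩⟩ :
      A.ncard ∈ S)) (not_le.2 hc)
    · exact ⟨fun s => s + t, fun x _ y _ => dist_add_right x y t, h⟩
    · refine ⟨fun s => -s + t, fun x _ y _ => ?_, h⟩
      simp
  have hXn : {x : Fin n → ℝ | ∀ i, x i ∈ X}.Finite := by
    have := Set.Finite.pi' (fun _ : Fin n => hX)
    exact this
  obtain ⟨A, hA, hAc, hAf⟩ := Nat.sSup_mem hSne hSb
  apply IsGreatest.csSup_eq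
  constructor
  · refine ⟨{x : Fin n → ℝ | ∀ i, x i ∈ A}, fun x hx i => hA (hx i), ?_,
      lower_aux B L hL h0 hLB hB A hAf n⟩
    have hAfin := hX.subset hA
    have : {x : Fin n → ℝ | ∀ i, x i ∈ A}
        = ((Fintype.piFinset (fun _ : Fin n => hAfin.toFinset) : Finset (Fin n → ℝ)) :
          Set (Fin n → ℝ)) := by
      ext x
      simp
    rw [this, ncard_coe_finset, Fintype.card_piFinset, ← hAc, ncard_eq_toFinset_card A hAfin]
    simp
  · rintro _ ⟨Y, hY, rfl, hno⟩
    by_contra hc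
    have hYf := hXn.subset hY
    apply hno
    have := upper_aux B X (sSup S) hup n hYf.toFinset
      (fun y hy => hY (hYf.mem_toFinset.1 hy)) (by
        rw [← ncard_eq_toFinset_card Y hYf]
        exact not_le.1 hc)
    simpa using this
end

section
/- For all integers k ≥ 2 and m, n ≥ 1, the maximum cardinality of a subset of {0,1,…,k}^n (equipped with the max-norm metric inherited from ℝ^n) that contains no isometric copy of {0,1,…,k}^m (equipped with the max-norm metric inherited from ℝ^m) equals Σ_{i=0}^{m−1} C(n,i)·k^{n−i}. -/
open Set Filter

/-- `{0,1,…,k}^m ⊆ ℝ^m` with the max metric. -/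
def box (m k : ℕ) : Set (Fin m → ℝ) :=
  {x | ∀ i, ∃ j : ℕ, j ≤ k ∧ x i = (j : ℝ)}

/-- the extremal number -/
def bF (k n m : ℕ) : ℕ := ∑ i ∈ Finset.range m, n.choose i * k ^ (n - i)

lemma bF_succ (k n m : ℕ) : bF k (n+1) (m+1) = k * bF k n (m+1) + bF k n m := by
  unfold bF
  rw [Finset.sum_range_succ', Finset.sum_range_succ', mul_add, Finset.mul_sum,
    add_right_comm, ← Finset.sum_add_distrib]
  congr 1
  · refine Finset.sum_congr rfl fun i _ => ?_
    rw [Nat.choose_succ_succ, Nat.add_sub_add_right]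
    rcases Nat.lt_or_ge i n with h | h
    · obtain ⟨d, rfl⟩ := Nat.exists_eq_add_of_lt h
      rw [show i + d + 1 - i = d + 1 by omega, show i + d + 1 - (i + 1) = d by omega]
      ring
    · rw [Nat.choose_eq_zero_of_lt (show n < i + 1 by omega)]
      ring
  · simp [pow_succ]; ring

lemma box_finite (n k : ℕ) : (box n k).Finite := by
  have : box n k ⊆ Set.pi Set.univ (fun _ : Fin n => (fun j : ℕ => (j:ℝ)) '' Set.Iic k) := by
    intro x hx i _
    obtain ⟨j, hj, h⟩ := hx i
    exact ⟨j, hj, h.symm⟩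
  exact (Set.Finite.pi' (fun _ => (Set.finite_Iic k).image _)).subset
    (fun x hx i => this hx i trivial)

lemma dist_cons {n : ℕ} (a b : ℝ) (u v : Fin n → ℝ) :
    dist (Fin.cons a u : Fin (n+1) → ℝ) (Fin.cons b v) = max (dist a b) (dist u v) := by
  apply le_antisymm
  · rw [dist_pi_le_iff (le_max_of_le_left dist_nonneg)]
    intro i
    refine Fin.cases ?_ (fun j => ?_) i
    · simp
    · simpa using Or.inr (dist_le_pi_dist u v j)
  · refine max_le ?_ ?_
    · simpa using dist_le_pi_dist (Fin.cons a u : Fin (n+1) → ℝ) (Fin.cons b v) 0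
    · rw [dist_pi_le_iff dist_nonneg]
      intro i
      simpa using dist_le_pi_dist (Fin.cons a u : Fin (n+1) → ℝ) (Fin.cons b v) i.succ

lemma one_le_dist_box {n k : ℕ} {u v : Fin n → ℝ} (hu : u ∈ box n k) (hv : v ∈ box n k)
    (h : u ≠ v) : 1 ≤ dist u v := by
  obtain ⟨i, hi⟩ := Function.ne_iff.1 h
  refine le_trans ?_ (dist_le_pi_dist u v i)
  obtain ⟨a, _, ha⟩ := hu i
  obtain ⟨b, _, hb⟩ := hv i
  rw [ha, hb] at hi ⊢
  rw [Nat.dist_cast_real]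
  have hab : a ≠ b := fun h => hi (by rw [h])
  rw [Nat.dist_eq]
  have : (1:ℤ) ≤ |(a:ℤ) - b| := Int.one_le_abs (by omega)
  exact_mod_cast this

lemma upper_bound (k : ℕ) : ∀ (n m : ℕ) (A : Set (Fin n → ℝ)), A ⊆ box n k →
    ¬ HasCopy (box m k) A → A.ncard ≤ bF k n m := by
  classical
  intro n
  induction n with
  | zero =>
    intro m A hA hc
    rcases Nat.eq_zero_or_pos m with rfl | hm
    · have : A = ∅ := by
        by_contra hne
        obtain ⟨a, ha⟩ := Set.nonempty_iff_ne_empty.2 hne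
        refine hc ⟨fun _ => a, fun x _ y _ => ?_, ?_⟩
        · simp [Subsingleton.elim x y]
        · rintro _ ⟨x, _, rfl⟩; exact ha
      simp [this]
    · obtain ⟨m, rfl⟩ := Nat.exists_eq_succ_of_ne_zero hm.ne'
      have h1 : A.ncard ≤ 1 := Set.ncard_le_one_of_subsingleton A
      refine h1.trans ?_
      unfold bF
      rw [Finset.sum_range_succ']
      simp
  | succ n ih =>
    intro m A hA hc
    rcases Nat.eq_zero_or_pos m with rfl | hm
    · have : A = ∅ := by
        by_contra hne
        obtain ⟨a, ha⟩ := Set.nonempty_iff_ne_empty.2 hne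
        refine hc ⟨fun _ => a, fun x _ y _ => ?_, ?_⟩
        · simp [Subsingleton.elim x y]
        · rintro _ ⟨x, _, rfl⟩; exact ha
      simp [this]
    obtain ⟨m, rfl⟩ := Nat.exists_eq_succ_of_ne_zero hm.ne'
    let R : ℕ → (Fin n → ℝ) → Prop := fun j y =>
      ∀ i : ℕ, i ≤ j → (Fin.cons (i:ℝ) y : Fin (n+1) → ℝ) ∈ A
    let U : ℕ → Set (Fin n → ℝ) := fun j =>
      {y | R j y ∨ (Fin.cons ((j+1 : ℕ):ℝ) y : Fin (n+1) → ℝ) ∈ A}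
    let I : Set (Fin n → ℝ) := {y | R k y}
    let h : ℕ → (Fin n → ℝ) → ℝ := fun j y => if R j y then (j:ℝ) else ((j+1:ℕ):ℝ)
    have hbox : ∀ (a : ℝ) (y : Fin n → ℝ), (Fin.cons a y : Fin (n+1) → ℝ) ∈ A → y ∈ box n k := by
      intro a y hy i
      simpa using hA hy i.succ
    have hUbox : ∀ j, U j ⊆ box n k := by
      rintro j y (hy | hy)
      · exact hbox _ _ (hy 0 (Nat.zero_le _))
      · exact hbox _ _ hy
    have hIbox : I ⊆ box n k := fun y hy => hbox _ _ (hy 0 (Nat.zero_le _))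
    have hUfin : ∀ j, (U j).Finite := fun j => (box_finite n k).subset (hUbox j)
    have hIfin : I.Finite := (box_finite n k).subset hIbox
    have hmem : ∀ j, ∀ y ∈ U j, (Fin.cons (h j y) y : Fin (n+1) → ℝ) ∈ A := by
      intro j y hy
      by_cases hR : R j y
      · simp only [h, if_pos hR]; exact hR j le_rfl
      · simp only [h, if_neg hR]; exact hy.resolve_left hR
    have hU : ∀ j, (U j).ncard ≤ bF k n (m+1) := by
      intro j
      refine ih _ _ (hUbox j) ?_
      rintro ⟨f, hf, hfi⟩
      refine hc ⟨fun x => Fin.cons (h j (f x)) (f x), fun x hx y hy => ?_, ?_⟩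
      · rw [dist_cons, ← hf x hx y hy]
        apply max_eq_right
        by_cases hxy : f x = f y
        · rw [hxy]; simp
        · refine le_trans ?_ (one_le_dist_box (hUbox j (hfi ⟨x, hx, rfl⟩))
            (hUbox j (hfi ⟨y, hy, rfl⟩)) hxy)
          simp only [h]
          split_ifs <;> simp [Real.dist_eq]
      · rintro _ ⟨x, hx, rfl⟩
        exact hmem j _ (hfi ⟨x, hx, rfl⟩)
    have hI : I.ncard ≤ bF k n m := by
      refine ih _ _ hIbox ?_
      rintro ⟨f, hf, hfi⟩
      have ht : ∀ x ∈ box (m+1) k, Fin.tail x ∈ box m k := fun x hx i => hx i.succ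
      refine hc ⟨fun x => Fin.cons (x 0) (f (Fin.tail x)), fun x hx y hy => ?_, ?_⟩
      · rw [dist_cons, hf _ (ht x hx) _ (ht y hy), ← dist_cons, Fin.cons_self_tail,
          Fin.cons_self_tail]
      · rintro _ ⟨x, hx, rfl⟩
        obtain ⟨j, hj, hxj⟩ := hx 0
        have := hfi ⟨_, ht x hx, rfl⟩ j hj
        simpa only [hxj] using this
    have hcover : A ⊆ (⋃ j ∈ Finset.range k, (fun y => (Fin.cons (h j y) y : Fin (n+1) → ℝ)) '' U j)
        ∪ (fun y => (Fin.cons (k:ℝ) y : Fin (n+1) → ℝ)) '' I := by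
      intro x hx
      obtain ⟨t, htk, hxt⟩ := hA hx 0
      have hxe : x = Fin.cons (t:ℝ) (Fin.tail x) := by rw [← hxt, Fin.cons_self_tail]
      have hx' := hx
      rw [hxe] at hx'
      by_cases hR : R t (Fin.tail x)
      · rcases htk.lt_or_eq with hlt | rfl
        · left
          simp only [Set.mem_iUnion, Finset.mem_range]
          refine ⟨t, hlt, Fin.tail x, Or.inl hR, ?_⟩
          simp only [h, if_pos hR]
          exact hxe.symm
        · right
          exact ⟨Fin.tail x, hR, hxe.symm⟩
      · left
        simp only [Set.mem_iUnion, Finset.mem_range]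
        cases t with
        | zero =>
          exfalso; apply hR
          intro i hi
          obtain rfl : i = 0 := by omega
          exact hx'
        | succ j =>
          have hR' : ¬ R j (Fin.tail x) := by
            intro hj
            apply hR
            intro i hi
            rcases Nat.lt_or_ge j i with h1 | h1
            · obtain rfl : i = j + 1 := by omega
              exact hx'
            · exact hj i h1
          refine ⟨j, htk, Fin.tail x, Or.inr hx', ?_⟩
          simp only [h, if_neg hR']
          exact hxe.symm
    have hfin1 : (⋃ j ∈ Finset.range k,
        (fun y => (Fin.cons (h j y) y : Fin (n+1) → ℝ)) '' U j).Finite :=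
      Set.Finite.biUnion (Finset.finite_toSet _) (fun j _ => (hUfin j).image _)
    calc A.ncard ≤ _ := Set.ncard_le_ncard hcover (hfin1.union (hIfin.image _))
      _ ≤ _ := Set.ncard_union_le _ _
      _ ≤ k * bF k n (m+1) + bF k n m := by
        refine add_le_add ?_ ((Set.ncard_image_le hIfin).trans hI)
        refine (Finset.set_ncard_biUnion_le _ _).trans ?_
        refine (Finset.sum_le_card_nsmul _ _ (bF k n (m+1))
          (fun j _ => (Set.ncard_image_le (hUfin j)).trans (hU j))).trans ?_
        simp
      _ = bF k (n+1) (m+1) := (bF_succ k n m).symm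

/-- extremal example -/
def exSet (k m n : ℕ) : Set (Fin n → ℝ) :=
  {x | x ∈ box n k ∧ (Finset.univ.filter (fun i => x i = ((k/2 : ℕ) : ℝ))).card < m}

lemma exSet_noCopy (k m n : ℕ) (hk : 2 ≤ k) : ¬ HasCopy (box m k) (exSet k m n) := by
  classical
  rintro ⟨f, hf, hfi⟩
  obtain ⟨v, hv⟩ : ∃ v, v = k / 2 := ⟨_, rfl⟩
  let c : Fin m → ℝ := fun _ => (v:ℝ)
  have hvk : v ≤ k := by omega
  have hc : c ∈ box m k := fun i => ⟨v, hvk, rfl⟩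
  have hupd : ∀ (j : Fin m) (t : ℕ), t ≤ k → Function.update c j (t:ℝ) ∈ box m k := by
    intro j t ht i
    by_cases h : i = j
    · subst h; exact ⟨t, ht, by simp⟩
    · exact ⟨v, hvk, by simp [h, c]⟩
  have hfb : ∀ x ∈ box m k, ∀ i, 0 ≤ f x i ∧ f x i ≤ k := by
    intro x hx i
    obtain ⟨j, hj, e⟩ := (hfi ⟨x, hx, rfl⟩).1 i
    rw [e]
    exact ⟨by positivity, by exact_mod_cast hj⟩
  have hlip : ∀ x ∈ box m k, ∀ y ∈ box m k, ∀ i, |f x i - f y i| ≤ dist x y := by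
    intro x hx y hy i
    rw [← hf x hx y hy, ← Real.dist_eq]
    exact dist_le_pi_dist _ _ i
  let a : Fin m → Fin m → ℝ := fun j => Function.update c j ((0:ℕ):ℝ)
  let b : Fin m → Fin m → ℝ := fun j => Function.update c j ((k:ℕ):ℝ)
  have ha : ∀ j, a j ∈ box m k := fun j => hupd j 0 (Nat.zero_le _)
  have hb : ∀ j, b j ∈ box m k := fun j => hupd j k le_rfl
  have hkR : (2:ℝ) ≤ k := by exact_mod_cast hk
  have hv1 : (1:ℝ) ≤ v := by exact_mod_cast (show 1 ≤ v by omega)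
  have hv2 : 2 * (v:ℝ) ≤ k := by exact_mod_cast (show 2 * v ≤ k by omega)
  have hv3 : (k:ℝ) ≤ 2 * v + 1 := by exact_mod_cast (show k ≤ 2 * v + 1 by omega)
  have hex : ∀ j, ∃ i, (f (a j) i = 0 ∧ f (b j) i = k) ∨ (f (a j) i = k ∧ f (b j) i = 0) := by
    intro j
    by_contra hcon
    push Not at hcon
    have hd : dist (a j) (b j) = k := by
      apply le_antisymm
      · rw [dist_pi_le_iff (by positivity)]
        intro i
        by_cases h : i = j
        · subst h; simp [a, b]
        · simp [a, b, h]
      · have := dist_le_pi_dist (a j) (b j) j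
        simpa [a, b] using this
    have hlt : dist (f (a j)) (f (b j)) < k := by
      rw [dist_pi_lt_iff (by positivity)]
      intro i
      obtain ⟨p1, p2⟩ := hfb _ (ha j) i
      obtain ⟨q1, q2⟩ := hfb _ (hb j) i
      obtain ⟨h1, h2⟩ := hcon i
      rw [Real.dist_eq, abs_lt]
      constructor
      · by_contra hh
        exact h1 (by linarith) (by linarith)
      · by_contra hh
        exact h2 (by linarith) (by linarith)
    rw [hf _ (ha j) _ (hb j), hd] at hlt
    exact lt_irrefl _ hlt
  choose i hi using hex
  -- the special point
  let z : Fin m → ℝ := fun j => if f (a j) (i j) = 0 then (v:ℝ) else ((k - v : ℕ):ℝ)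
  have hz : z ∈ box m k := by
    intro j
    by_cases h : f (a j) (i j) = 0
    · exact ⟨v, hvk, by simp [z, h]⟩
    · exact ⟨k - v, by omega, by simp [z, h]⟩
  have hzv : ∀ j, (z j = v ∨ z j = k - v) := by
    intro j
    by_cases h : f (a j) (i j) = 0
    · left; simp [z, h]
    · right; simp [z, h, Nat.cast_sub hvk]
  have hda : ∀ j, dist z (a j) ≤ z j := by
    intro j
    have hzj : (1:ℝ) ≤ z j := by rcases hzv j with h | h <;> rw [h] <;> linarith
    rw [dist_pi_le_iff (by linarith)]
    intro l
    by_cases h : l = j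
    · subst h; simp only [a, Function.update_self, Real.dist_eq]
      rw [abs_le]; constructor <;> push_cast <;> linarith
    · simp only [a, Function.update_of_ne h, Real.dist_eq, c]
      rw [abs_le]
      rcases hzv l with h' | h' <;> rw [h'] <;> constructor <;> linarith
  have hdb : ∀ j, dist z (b j) ≤ k - z j := by
    intro j
    have hzj : (1:ℝ) ≤ k - z j := by rcases hzv j with h | h <;> rw [h] <;> linarith
    rw [dist_pi_le_iff (by linarith)]
    intro l
    by_cases h : l = j
    · subst h; simp only [b, Function.update_self, Real.dist_eq]
      rw [abs_le]; constructor <;> linarith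
    · simp only [b, Function.update_of_ne h, Real.dist_eq, c]
      rw [abs_le]
      rcases hzv l with h' | h' <;> rw [h'] <;> constructor <;> linarith
  have hfz : ∀ j, f z (i j) = v := by
    intro j
    have h1 := abs_le.1 ((hlip _ hz _ (ha j) (i j)).trans (hda j))
    have h2 := abs_le.1 ((hlip _ hz _ (hb j) (i j)).trans (hdb j))
    rcases hi j with ⟨e1, e2⟩ | ⟨e1, e2⟩
    · have : z j = v := by simp [z, e1]
      rw [e1, this] at h1; rw [e2, this] at h2
      linarith [h1.1, h1.2, h2.1, h2.2]
    · have hne : f (a j) (i j) ≠ 0 := by rw [e1]; linarith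
      have : z j = k - v := by simp only [z, if_neg hne, Nat.cast_sub hvk]
      rw [e1, this] at h1; rw [e2, this] at h2
      linarith [h1.1, h1.2, h2.1, h2.2]
  have hinj : Function.Injective i := by
    intro j l hjl
    by_contra hne
    have hne' : ¬ l = j := fun h => hne h.symm
    have hD : ∀ s t : ℕ, s ≤ k → t ≤ k →
        dist (Function.update c j (s:ℝ)) (Function.update c l (t:ℝ)) ≤ k - 1 := by
      intro s t hs ht
      have hs' : (s:ℝ) ≤ k := by exact_mod_cast hs
      have ht' : (t:ℝ) ≤ k := by exact_mod_cast ht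
      have hs0 : (0:ℝ) ≤ s := by positivity
      have ht0 : (0:ℝ) ≤ t := by positivity
      rw [dist_pi_le_iff (by linarith)]
      intro q
      rw [Real.dist_eq, abs_le]
      by_cases h : q = j
      · subst h
        simp only [Function.update_self, Function.update_of_ne hne, c]
        constructor <;> linarith
      · by_cases h' : q = l
        · subst h'
          simp only [Function.update_self, Function.update_of_ne hne', c]
          constructor <;> linarith
        · simp only [Function.update_of_ne h, Function.update_of_ne h', c]
          constructor <;> linarith
    have g1 := abs_le.1 ((hlip _ (ha j) _ (ha l) (i j)).trans
      (hD 0 0 (Nat.zero_le _) (Nat.zero_le _)))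
    have g2 := abs_le.1 ((hlip _ (ha j) _ (hb l) (i j)).trans (hD 0 k (Nat.zero_le _) le_rfl))
    have hl := hi l
    rw [← hjl] at hl
    rcases hi j with ⟨e1, e2⟩ | ⟨e1, e2⟩ <;> rcases hl with ⟨e3, e4⟩ | ⟨e3, e4⟩ <;>
      rw [e1, e3] at g1 <;> rw [e1, e4] at g2 <;> linarith [g1.1, g1.2, g2.1, g2.2]
  have hlt := (hfi ⟨z, hz, rfl⟩).2
  rw [← hv] at hlt
  have : m ≤ (Finset.univ.filter (fun q => f z q = (v:ℝ))).card := by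
    calc m = (Finset.univ.image i).card := by
          rw [Finset.card_image_of_injective _ hinj]; simp
      _ ≤ _ := by
          apply Finset.card_le_card
          intro q hq
          obtain ⟨j, _, rfl⟩ := Finset.mem_image.1 hq
          simp [hfz j]
  omega

lemma card_ex (k m n : ℕ) (v : Fin (k+1)) :
    (Finset.univ.filter (fun x : Fin n → Fin (k+1) =>
      (Finset.univ.filter (fun i => x i = v)).card < m)).card = bF k n m := by
  classical
  rw [Finset.card_eq_sum_card_fiberwise (t := Finset.range m)
    (f := fun x : Fin n → Fin (k+1) => (Finset.univ.filter (fun i => x i = v)).card)]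
  · unfold bF
    refine Finset.sum_congr rfl fun r hr => ?_
    rw [Finset.card_eq_sum_card_fiberwise (t := Finset.powersetCard r Finset.univ)
      (f := fun x : Fin n → Fin (k+1) => Finset.univ.filter (fun i => x i = v))]
    · rw [Finset.sum_const_nat (m := k ^ (n - r))]
      · simp
      · intro S hS
        rw [Finset.mem_powersetCard] at hS
        have : (Finset.filter (fun x : Fin n → Fin (k+1) =>
            Finset.univ.filter (fun i => x i = v) = S)
            (Finset.filter (fun x : Fin n → Fin (k+1) =>
              (Finset.univ.filter (fun i => x i = v)).card = r)
              (Finset.univ.filter (fun x : Fin n → Fin (k+1) =>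
                (Finset.univ.filter (fun i => x i = v)).card < m)))) =
            Fintype.piFinset (fun i => if i ∈ S then {v} else Finset.univ.erase v) := by
          ext x
          simp only [Finset.mem_filter, Finset.mem_univ, true_and, Fintype.mem_piFinset]
          constructor
          · rintro ⟨_, rfl⟩ i
            by_cases h : x i = v <;> simp [h]
          · intro h
            have e : Finset.univ.filter (fun i => x i = v) = S := by
              ext i
              have := h i
              by_cases hi : i ∈ S <;> simp_all
            rw [e]
            refine ⟨⟨?_, hS.2⟩, rfl⟩
            rw [hS.2]; exact Finset.mem_range.1 hr
        rw [this, Fintype.card_piFinset]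
        have e : ∀ i, (if i ∈ S then ({v} : Finset (Fin (k+1))) else Finset.univ.erase v).card
            = if i ∈ S then 1 else k := by
          intro i; split_ifs <;> simp
        simp only [e]
        rw [Finset.prod_ite]
        simp only [Finset.prod_const, one_pow, one_mul]
        congr 1
        rw [Finset.filter_not, Finset.card_sdiff_of_subset (Finset.filter_subset _ _)]
        simp [hS.2]
    · intro x hx
      simp only [Finset.coe_filter, Set.mem_ofPred_eq] at hx
      simp [Finset.mem_powersetCard, hx.2]
  · intro x hx
    simpa using hx

lemma exSet_card (k m n : ℕ) : (exSet k m n).ncard = bF k n m := by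
  classical
  have hv : k / 2 < k + 1 := by omega
  rw [← card_ex k m n ⟨k/2, hv⟩]
  have hinj : Function.Injective (fun (x : Fin n → Fin (k+1)) (i : Fin n) => ((x i : ℕ) : ℝ)) := by
    intro x y h
    ext i
    have := congrFun h i
    simpa using this
  rw [← Set.ncard_coe_finset, ← Set.ncard_image_of_injective _ hinj]
  congr 1
  ext x
  constructor
  · rintro ⟨hx, hc⟩
    choose g hg hxg using hx
    refine ⟨fun i => ⟨g i, Nat.lt_succ_of_le (hg i)⟩, ?_, ?_⟩
    · simp only [hxg, Nat.cast_inj] at hc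
      simpa [Fin.ext_iff] using hc
    · ext i; simp [hxg]
  · rintro ⟨y, hy, rfl⟩
    refine ⟨fun i => ⟨y i, Nat.lt_succ_iff.1 (y i).2, rfl⟩, ?_⟩
    simp only [Nat.cast_inj]
    simpa [Fin.ext_iff] using hy

/-- For `k ≥ 2` and `m, n ≥ 1`, the maximum cardinality of a subset of `{0,…,k}^n`
(max metric) containing no isometric copy of `{0,…,k}^m` equals
`∑_{i=0}^{m−1} C(n,i) k^(n−i)`. -/
theorem alpha_box_power (k m n : ℕ) (hk : 2 ≤ k) (hm : 1 ≤ m) (hn : 1 ≤ n) :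
    sSup {c : ℕ | ∃ Y ⊆ box n k, Y.ncard = c ∧ ¬ HasCopy (box m k) Y}
  = ∑ i ∈ Finset.range m, n.choose i * k ^ (n - i) := by
  have h : IsGreatest {c : ℕ | ∃ Y ⊆ box n k, Y.ncard = c ∧ ¬ HasCopy (box m k) Y}
      (bF k n m) := by
    refine ⟨⟨exSet k m n, fun x hx => hx.1, exSet_card k m n, exSet_noCopy k m n hk⟩, ?_⟩
    rintro c ⟨Y, hY, rfl, hc⟩
    exact upper_bound k n m Y hY hc
  exact h.csSup_eq
end

section
/- For every n ∈ ℕ and every 0 < ε ≤ 1/2 there exists q_0 > 0 such that the following holds for every 0 < q ≤ q_0: for every colouring of the cube [−ε, 1+ε]^n ⊂ ℝ^n (equipped with the max-norm metric) with n colours, some colour class contains a monochromatic proper isometric copy of G(q). -/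
open Set Filter

/-- Box with free coordinates `S`. -/
def CBox {n : ℕ} (S : Finset (Fin n)) (b a : Fin n → ℝ) (L : ℝ) : Set (Fin n → ℝ) :=
  {x | (∀ j ∈ S, a j ≤ x j ∧ x j ≤ a j + L) ∧ ∀ j, j ∉ S → x j = b j}

/-- A monochromatic copy of scale `r` in colour `i` and direction `i`. -/
def CCopy {n : ℕ} (c : (Fin n → ℝ) → Fin n) (q r : ℝ) (B : Set (Fin n → ℝ))
    (i : Fin n) (x : ℕ → Fin n → ℝ) : Prop :=
  ∀ k, x k ∈ B ∧ c (x k) = i ∧ x (k+1) i = x k i - r * q ^ k ∧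
    ∀ j, |x (k+1) j - x k j| ≤ r * q ^ k

/-- The inductive property. -/
def CProp (n m : ℕ) : Prop :=
  ∀ ε : ℝ, 0 < ε → ε ≤ 1 → ∃ q0 : ℝ, 0 < q0 ∧ ∀ q : ℝ, 0 < q → q ≤ q0 →
    ∀ S : Finset (Fin n), S.card = m → ∀ (b a : Fin n → ℝ) (r : ℝ), 0 < r →
    ∀ c : (Fin n → ℝ) → Fin n, (∀ x ∈ CBox S b a (r * (1 + ε)), c x ∈ S) →
    ∃ i ∈ S, ∃ x, CCopy c q r (CBox S b a (r * (1 + ε))) i x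

lemma CBox_nonempty {n : ℕ} (S : Finset (Fin n)) (b a : Fin n → ℝ) (L : ℝ) (hL : 0 ≤ L) :
    ∃ x, x ∈ CBox S b a L := by
  classical
  refine ⟨fun j => if j ∈ S then a j else b j, ?_, ?_⟩
  · intro j hj; simp [hj, hL]
  · intro j hj; simp [hj]

lemma CCopy.mono {n : ℕ} {c : (Fin n → ℝ) → Fin n} {q r : ℝ} {B B' : Set (Fin n → ℝ)}
    {i : Fin n} {x : ℕ → Fin n → ℝ} (h : CCopy c q r B i x) (hB : B ⊆ B') :
    CCopy c q r B' i x := fun k => ⟨hB (h k).1, (h k).2⟩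

lemma CBox_shift {n : ℕ} {S : Finset (Fin n)} {b a a' : Fin n → ℝ} {L L' : ℝ}
    (h1 : ∀ j ∈ S, a j ≤ a' j) (h2 : ∀ j ∈ S, a' j + L' ≤ a j + L) :
    CBox S b a' L' ⊆ CBox S b a L := by
  rintro x ⟨hx, hx'⟩
  exact ⟨fun j hj => ⟨(h1 j hj).trans (hx j hj).1, (hx j hj).2.trans (h2 j hj)⟩, hx'⟩

lemma CBox_face {n : ℕ} {S : Finset (Fin n)} {b a : Fin n → ℝ} {L L' v : ℝ} {i : Fin n}
    (hi : i ∈ S) (hL : L' ≤ L) (h1 : a i ≤ v) (h2 : v ≤ a i + L) :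
    CBox (S.erase i) (Function.update b i v) a L' ⊆ CBox S b a L := by
  rintro x ⟨hx, hx'⟩
  refine ⟨fun j hj => ?_, fun j hj => ?_⟩
  · by_cases hji : j = i
    · subst hji
      have := hx' j (by simp)
      simp at this
      rw [this]; exact ⟨h1, h2⟩
    · have := hx j (by simp [hji, hj])
      exact ⟨this.1, by linarith [this.2]⟩
  · have hji : j ≠ i := fun h => hj (h ▸ hi)
    have := hx' j (by simp [hj])
    simpa [hji] using this

theorem CProp_all (n m : ℕ) : CProp n m := by
  classical
  induction m with
  | zero =>
    intro ε h0 h1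
    refine ⟨1, one_pos, ?_⟩
    intro q hq hq1 S hS b a r hr c hc
    obtain ⟨x, hx⟩ := CBox_nonempty S b a (r * (1 + ε)) (by positivity)
    have := hc x hx
    rw [Finset.card_eq_zero] at hS
    simp [hS] at this
  | succ m ih =>
    intro ε h0 h1
    obtain ⟨q1, hq1, IH⟩ := ih (ε/2) (by linarith) (by linarith)
    refine ⟨min q1 (ε/8), by positivity, ?_⟩
    intro q hq hqq S hS b a r hr c hc
    have hqq1 : q ≤ q1 := hqq.trans (min_le_left _ _)
    have hq8 : q ≤ ε/8 := hqq.trans (min_le_right _ _)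
    have hqs : q * (1 + 3*ε/4) ≤ ε/4 := by nlinarith
    by_contra H
    -- the face lemma
    have face : ∀ (a : Fin n → ℝ) (R : ℝ), 0 < R →
        (∀ x ∈ CBox S b a (R * (1 + ε)), c x ∈ S) →
        (¬ ∃ i ∈ S, ∃ x, CCopy c q R (CBox S b a (R * (1 + ε))) i x) →
        ∀ i ∈ S, ∀ v, a i ≤ v → v ≤ a i + R * (1 + ε) →
        ∃ y ∈ CBox (S.erase i) (Function.update b i v) a (R * (1 + ε/2)), c y = i := by
      intro a R hR hc H i hi v hv1 hv2
      by_contra hno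
      push Not at hno
      have hsub := CBox_face (b := b) hi
        (by nlinarith : R * (1 + ε/2) ≤ R * (1 + ε)) hv1 hv2
      obtain ⟨j, hj, x, hx⟩ := IH q hq hqq1 (S.erase i)
        (by rw [Finset.card_erase_of_mem hi, hS]; rfl)
        (Function.update b i v) a R hR c
        (fun x hx => Finset.mem_erase.2 ⟨hno x hx, hc x (hsub hx)⟩)
      exact H ⟨j, Finset.mem_of_mem_erase hj, x, hx.mono hsub⟩
    -- inclusion of the next box
    have incl : ∀ (a : Fin n → ℝ) (R : ℝ), 0 < R →
        CBox S b (fun j => a j + R * (3*ε/4 - q * (1 + 3*ε/4))) (R * q * (1 + ε)) ⊆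
        CBox S b a (R * (1 + ε)) := by
      intro a R hR
      apply CBox_shift
      · intro j _
        nlinarith [mul_le_mul_of_nonneg_left hqs hR.le, mul_pos hR h0]
      · intro j _
        have : R * (3*ε/4 - q * (1 + 3*ε/4)) + R * q * (1+ε) = R * (3*ε/4 + q * (ε/4)) := by ring
        have h2 : R * (3*ε/4 + q * (ε/4)) ≤ R * (1+ε) := by
          apply mul_le_mul_of_nonneg_left _ hR.le
          nlinarith
        linarith
    -- descent
    have desc : ∀ (a : Fin n → ℝ) (R : ℝ), 0 < R →
        (∀ x ∈ CBox S b a (R * (1 + ε)), c x ∈ S) →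
        (¬ ∃ i ∈ S, ∃ x, CCopy c q R (CBox S b a (R * (1 + ε))) i x) →
        (¬ ∃ i ∈ S, ∃ x, CCopy c q (R * q) (CBox S b
          (fun j => a j + R * (3*ε/4 - q * (1 + 3*ε/4))) (R * q * (1 + ε))) i x) := by
      rintro a R hR hc H ⟨i, hi, x, hx⟩
      have hRε := mul_pos hR h0
      have hpos : ∀ j ∈ S, a j + R * (ε/2) ≤ x 0 j ∧ x 0 j ≤ a j + R * ε := by
        intro j hj
        have := (hx 0).1.1 j hj
        have e : R * (3*ε/4 - q * (1 + 3*ε/4)) + R * q * (1+ε) = R * (3*ε/4 + q * (ε/4)) := by ring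
        have e2 : R * (3*ε/4 + q * (ε/4)) ≤ R * ε := by
          apply mul_le_mul_of_nonneg_left _ hR.le
          nlinarith
        have e3 : R * (ε/2) ≤ R * (3*ε/4 - q * (1 + 3*ε/4)) := by
          apply mul_le_mul_of_nonneg_left _ hR.le
          linarith
        constructor <;> linarith [this.1, this.2]
      have hRε1 : R * ε ≤ R := by nlinarith
      obtain ⟨y, hy, hyc⟩ := face a R hR hc H i hi (x 0 i + R)
        (by nlinarith [hpos i hi]) (by nlinarith [hpos i hi])
      have hyi : y i = x 0 i + R := by
        have := hy.2 i (by simp)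
        simpa using this
      have hyB : y ∈ CBox S b a (R * (1 + ε)) :=
        CBox_face hi (by nlinarith) (by nlinarith [hpos i hi]) (by nlinarith [hpos i hi]) hy
      refine H ⟨i, hi, fun k => Nat.casesOn k y x, ?_⟩
      rintro (_ | k)
      · refine ⟨hyB, hyc, ?_, ?_⟩
        · simp [hyi]
        · intro j
          simp only [pow_zero, mul_one]
          by_cases hji : j = i
          · subst hji
            show |x 0 j - y j| ≤ R
            rw [hyi, abs_le]; constructor <;> linarith
          · show |x 0 j - y j| ≤ R
            by_cases hj : j ∈ S
            · have h3 := hy.1 j (by simp [hj, hji])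
              have h4 := hpos j hj
              rw [abs_le]; constructor <;> nlinarith
            · rw [hyB.2 j hj, (hx 0).1.2 j hj]; simp [hR.le]
      · have := hx k
        refine ⟨incl a R hR this.1, this.2.1, ?_, ?_⟩
        · show x (k+1) i = x k i - R * q^(k+1)
          rw [this.2.2.1]; ring
        · intro j
          show |x (k+1) j - x k j| ≤ R * q^(k+1)
          have h5 := this.2.2.2 j
          rw [pow_succ']; linarith
    -- iterate
    let A : ℕ → Fin n → ℝ := fun k => Nat.rec a
      (fun k a' j => a' j + r * q^k * (3*ε/4 - q * (1 + 3*ε/4))) k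
    have hA0 : A 0 = a := rfl
    have hAs : ∀ k, A (k+1) = fun j => A k j + r * q^k * (3*ε/4 - q * (1 + 3*ε/4)) :=
      fun k => rfl
    have hRk : ∀ k, 0 < r * q^k := fun k => by positivity
    have main : ∀ k, CBox S b (A k) (r * q^k * (1+ε)) ⊆ CBox S b a (r * (1+ε)) ∧
        ¬ ∃ i ∈ S, ∃ x, CCopy c q (r*q^k) (CBox S b (A k) (r * q^k * (1 + ε))) i x := by
      intro k
      induction k with
      | zero => rw [hA0]; simpa using H
      | succ k ihk =>
        have e : r * q^(k+1) = r * q^k * q := by ring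
        rw [hAs, e]
        exact ⟨(incl (A k) _ (hRk k)).trans ihk.1,
          desc (A k) _ (hRk k) (fun x hx => hc x (ihk.1 hx)) ihk.2⟩
    have hne : S.Nonempty := by rw [← Finset.card_pos, hS]; omega
    obtain ⟨i, hi⟩ := hne
    have ex : ∀ k, ∃ y ∈ CBox (S.erase i)
        (Function.update b i (A k i + r*q^k * (1 + 3*ε/4))) (A k) (r*q^k * (1 + ε/2)), c y = i := by
      intro k
      refine face (A k) _ (hRk k) (fun x hx => hc x ((main k).1 hx)) (main k).2 i hi _ ?_ ?_
      · have := mul_pos (hRk k) (by linarith : 0 < 1 + 3*ε/4); linarith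
      · have := mul_le_mul_of_nonneg_left (by linarith : 1 + 3*ε/4 ≤ 1 + ε) (hRk k).le; linarith
    choose x hx hxc using ex
    have hxi : ∀ k, x k i = A k i + r*q^k * (1 + 3*ε/4) := by
      intro k
      have := (hx k).2 i (by simp)
      simpa using this
    have hxB : ∀ k, x k ∈ CBox S b (A k) (r*q^k*(1+ε)) := by
      intro k
      refine CBox_face hi ?_ ?_ ?_ (hx k)
      · exact mul_le_mul_of_nonneg_left (by linarith) (hRk k).le
      · have := mul_pos (hRk k) (by linarith : 0 < 1 + 3*ε/4); linarith
      · have := mul_le_mul_of_nonneg_left (by linarith : 1 + 3*ε/4 ≤ 1 + ε) (hRk k).le; linarith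
    have hstep : ∀ k, x (k+1) i = x k i - r * q^k := by
      intro k
      rw [hxi, hxi, hAs]; ring
    refine H ⟨i, hi, x, fun k => ⟨(main k).1 (hxB k), hxc k, hstep k, fun j => ?_⟩⟩
    have hR := hRk k
    by_cases hji : j = i
    · subst hji
      rw [hstep, abs_le]; constructor <;> linarith
    · by_cases hj : j ∈ S
      · have h3 := (hx k).1 j (by simp [hj, hji])
        have h4 := (hx (k+1)).1 j (by simp [hj, hji])
        rw [hAs, pow_succ] at h4
        simp only at h4
        generalize q^k = Q at *
        have e1 : r * Q * (ε/2) ≤ r * Q * (3*ε/4 - q * (1 + 3*ε/4)) :=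
          mul_le_mul_of_nonneg_left (by linarith) hR.le
        have e2 : r * Q * (3*ε/4 - q * (1 + 3*ε/4)) + r * (Q * q) * (1 + ε/2) ≤ r * Q * 1 := by
          have : r * Q * (3*ε/4 - q * (1 + 3*ε/4)) + r * (Q * q) * (1 + ε/2)
            = r * Q * (3*ε/4 - q * (ε/4)) := by ring
          rw [this]
          apply mul_le_mul_of_nonneg_left _ hR.le
          nlinarith
        rw [abs_le]; constructor <;> linarith
      · rw [(hxB k).2 j hj, (hxB (k+1)).2 j hj]; simp [hR.le]

lemma copy_lip {n : ℕ} {q : ℝ} {x : ℕ → Fin n → ℝ}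
    (h : ∀ k j, |x (k+1) j - x k j| ≤ q ^ k) (j : Fin n) (k l : ℕ) (hkl : k ≤ l) :
    |x l j - x k j| ≤ ∑ i ∈ Finset.range l, q ^ i - ∑ i ∈ Finset.range k, q ^ i := by
  induction l, hkl using Nat.le_induction with
  | base => simp
  | succ l _ ih =>
    rw [Finset.sum_range_succ]
    have := abs_sub_le (x (l+1) j) (x l j) (x k j)
    linarith [h l j]

/-- For every `n` and `0 < ε ≤ 1/2` there is `q₀ > 0` such that for all `0 < q ≤ q₀`:
every `n`-colouring of the cube `[−ε, 1+ε]^n ⊆ ℝ^n` (max metric) contains a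
monochromatic proper isometric copy of `G(q)`, i.e. an isometric copy such that for
some coordinate `idx` the set of `idx`-th coordinates of its points is a translate
of `−G(q)`. -/
theorem cube_colouring_proper_copy (n : ℕ) (ε : ℝ) (hε0 : 0 < ε) (hε : ε ≤ 1 / 2) :
    ∃ q0 : ℝ, 0 < q0 ∧ ∀ q : ℝ, 0 < q → q ≤ q0 →
      ∀ c : (Fin n → ℝ) → Fin n,
        ∃ (i : Fin n) (f : ℝ → (Fin n → ℝ)),
          (∀ x ∈ geomSet q, ∀ y ∈ geomSet q, dist (f x) (f y) = dist x y) ∧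
          (∀ x ∈ geomSet q, (∀ j : Fin n, f x j ∈ Set.Icc (-ε) (1 + ε)) ∧ c (f x) = i) ∧
          (∃ (idx : Fin n) (t : ℝ),
            (fun p => f p idx) '' geomSet q = (fun s => t - s) '' geomSet q) := by
  obtain ⟨q0, hq0, key⟩ := CProp_all n n ε hε0 (by linarith)
  refine ⟨q0, hq0, ?_⟩
  intro q hq hqq c
  obtain ⟨i, _, x, hx⟩ := key q hq hqq Finset.univ (by simp) (fun _ => 0) (fun _ => -ε) 1
    one_pos c (fun _ _ => Finset.mem_univ _)
  have hlip : ∀ k j, |x (k+1) j - x k j| ≤ q ^ k := fun k j => by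
    simpa using (hx k).2.2.2 j
  have hxi : ∀ k, x k i = x 0 i - ∑ l ∈ Finset.range k, q ^ l := by
    intro k
    induction k with
    | zero => simp
    | succ k ih => rw [(hx k).2.2.1, ih, Finset.sum_range_succ]; ring
  have hmono : StrictMono (fun m : ℕ => ∑ l ∈ Finset.range m, q ^ l) := by
    apply strictMono_nat_of_lt_succ
    intro m
    rw [Finset.sum_range_succ]
    have := pow_pos hq m
    linarith
  let f : ℝ → Fin n → ℝ :=
    fun s => x (Function.invFun (fun m : ℕ => ∑ l ∈ Finset.range m, q ^ l) s)
  have hf : ∀ k : ℕ, f (∑ l ∈ Finset.range k, q ^ l) = x k := fun k =>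
    congrArg x (Function.leftInverse_invFun hmono.injective k)
  have hd : ∀ k l : ℕ, k ≤ l → dist (x l) (x k) =
      dist (∑ i ∈ Finset.range l, q ^ i) (∑ i ∈ Finset.range k, q ^ i) := by
    intro k l hkl
    have hle := hmono.monotone hkl
    apply le_antisymm
    · rw [dist_pi_le_iff dist_nonneg]
      intro j
      rw [Real.dist_eq, Real.dist_eq, abs_of_nonneg (sub_nonneg.2 hle)]
      exact copy_lip hlip j k l hkl
    · have := dist_le_pi_dist (x l) (x k) i
      rw [hxi l, hxi k, dist_sub_left] at this
      exact this
  refine ⟨i, f, ?_, ?_, i, x 0 i, ?_⟩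
  · rintro _ ⟨k, rfl⟩ _ ⟨l, rfl⟩
    simp only [hf]
    rcases le_total k l with h | h
    · rw [dist_comm, hd k l h, dist_comm]
    · exact hd l k h
  · rintro _ ⟨k, rfl⟩
    simp only [hf]
    refine ⟨fun j => ?_, (hx k).2.1⟩
    have := (hx k).1.1 j (Finset.mem_univ _)
    exact ⟨this.1, by linarith [this.2]⟩
  · apply Set.image_congr
    rintro _ ⟨k, rfl⟩
    simp only [hf]
    exact hxi k
end
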